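/- arXiv:2112.11794 — 4 statements merged into one kernel-verified Lean document; each statement's English description precedes it below -/
import Mathlib

section
/- Let f and g be symmetric simple-loop symbols of class SL^α with α ≥ 2, and for each n set h = 1/(n+1) (so that f + h·g is again a symmetric simple-loop symbol for every n). Then there exist a constant C > 0 and N ∈ ℕ such that for all n ≥ N and all s ∈ (0,π): |η_{f+h·g}(s) − η_f(s) − ψ(s)·h| ≤ C h². -/
open MeasureTheory Filter Real Topology

noncomputable section

/-- The `k`-th Fourier coefficient of a (2π-periodic) function `u : ℝ → ℝ`. -/
def fCoeff (u : ℝ → ℝ) (k : ℤ) : ℂ :=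
  (1 / (2 * (π : ℂ))) * ∫ θ in (0:ℝ)..(2*π), (u θ : ℂ) * Complex.exp (-Complex.I * (k : ℂ) * (θ : ℂ))

/-- The `n × n` Toeplitz matrix generated by `u`. -/
def toeplitz (u : ℝ → ℝ) (n : ℕ) : Matrix (Fin n) (Fin n) ℂ :=
  Matrix.of fun i j => fCoeff u ((i : ℤ) - (j : ℤ))

/-- The eigenvalues of a Hermitian matrix, arranged in nondecreasing order. -/
def sortedEigs {n : ℕ} {A : Matrix (Fin n) (Fin n) ℂ} (hA : A.IsHermitian) : Fin n → ℝ :=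
  hA.eigenvalues ∘ Tuple.sort hA.eigenvalues

/-- Cauchy principal value of `∫_0^{2π} u`, where `u` is singular (only) at `s` and `2π - s`. -/
def pvIntegral2 (u : ℝ → ℝ) (s : ℝ) : ℝ :=
  limUnder (𝓝[>] (0:ℝ)) fun ε =>
    ∫ σ in Set.Icc (0:ℝ) (2*π) \ (Set.Ioo (s-ε) (s+ε) ∪ Set.Ioo (2*π-s-ε) (2*π-s+ε)), u σ

/-- The function `b_f(σ,s) = (f(σ) - f(s))/(2(cos s - cos σ))`, extended by continuity to the
points where `cos σ = cos s`. -/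
def bSymb (f : ℝ → ℝ) (σ s : ℝ) : ℝ :=
  if Real.cos σ = Real.cos s then
    limUnder (𝓝[≠] σ) fun τ => (f τ - f s) / (2 * (Real.cos s - Real.cos τ))
  else (f σ - f s) / (2 * (Real.cos s - Real.cos σ))

/-- The function `η_f`. -/
def etaF (f : ℝ → ℝ) (s : ℝ) : ℝ :=
  (Real.sin s / (2*π)) *
    pvIntegral2 (fun σ => Real.log (bSymb f σ s) / (Real.cos s - Real.cos σ)) s

/-- The function `ψ` associated with symbols `f` and `g`. -/
def psiF (f g : ℝ → ℝ) (s : ℝ) : ℝ :=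
  (Real.sin s / (2*π)) *
    pvIntegral2 (fun σ => bSymb g σ s / (bSymb f σ s * (Real.cos s - Real.cos σ))) s

/-- The function `φ` associated with symbols `f` and `g`. -/
def phiF (f g : ℝ → ℝ) (s : ℝ) : ℝ :=
  (Real.sin s / (2*π)) *
    pvIntegral2
      (fun σ => bSymb g σ s / ((bSymb f σ s + bSymb g σ s) * (Real.cos s - Real.cos σ))) s

/-- A symmetric simple-loop symbol of class `SL^α`. -/
structure IsSimpleLoop (α : ℝ) (f : ℝ → ℝ) : Prop where
  periodic : Function.Periodic f (2*π)
  smooth : ContDiff ℝ 2 f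
  wiener : Summable fun k : ℤ => ‖fCoeff f k‖ * ((k.natAbs : ℝ) + 1) ^ α
  symm : ∀ s, f (2*π - s) = f s
  f_zero : f 0 = 0
  deriv_zero : deriv f 0 = 0
  deriv2_zero : 0 < deriv (deriv f) 0
  deriv_pos : ∀ σ ∈ Set.Ioo (0:ℝ) π, 0 < deriv f σ
  deriv_pi : deriv f π = 0
  deriv2_pi : deriv (deriv f) π < 0
  f_pi : 0 < f π

end


noncomputable def qf (f : ℝ → ℝ) (s σ : ℝ) : ℝ := (f σ - f s) / (2 * (Real.cos s - Real.cos σ))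

lemma phi_tendsto (u : ℝ → ℝ) (p u' : ℝ) (hu : HasDerivAt u u' p) (h0 : u p = 0)
    (hs : Real.sin p = 0) (hc : Real.cos p ≠ 0) :
    Tendsto (fun x => u x / Real.sin x) (𝓝[≠] p) (𝓝 (u' / Real.cos p)) := by
  have h1 := hasDerivAt_iff_tendsto_slope.1 hu
  have h2 := hasDerivAt_iff_tendsto_slope.1 (Real.hasDerivAt_sin p)
  refine (h1.div h2 hc).congr' ?_
  filter_upwards [self_mem_nhdsWithin] with x hx
  have : x - p ≠ 0 := sub_ne_zero.2 hx
  simp only [Pi.div_apply, slope_def_field, h0, hs, sub_zero]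
  field_simp

lemma contDiff_deriv1 {f : ℝ → ℝ} (hf : ContDiff ℝ 2 f) : ContDiff ℝ 1 (deriv f) := by
  have h : ContDiff ℝ (1 + 1) f := hf.of_le (by norm_num [one_add_one_eq_two])
  exact (contDiff_succ_iff_deriv.1 h).2.2

lemma phi_bounds {α : ℝ} {f : ℝ → ℝ} (hf : IsSimpleLoop α f) :
    ∃ m > (0:ℝ), ∃ M > (0:ℝ), ∀ x ∈ Set.Ioo (0:ℝ) π,
      m ≤ deriv f x / Real.sin x ∧ deriv f x / Real.sin x ≤ M := by
  have hd : ContDiff ℝ 1 (deriv f) := contDiff_deriv1 hf.smooth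
  have hdd : ∀ x, HasDerivAt (deriv f) (deriv (deriv f) x) x := fun x =>
    (hd.differentiable (by norm_num) x).hasDerivAt
  have t0 := phi_tendsto (deriv f) 0 _ (hdd 0) hf.deriv_zero (by simp) (by simp)
  have t1 := phi_tendsto (deriv f) π _ (hdd π) hf.deriv_pi (by simp) (by simp)
  have t0' := t0.mono_left (nhdsWithin_mono 0 (fun x (hx : x ∈ Set.Ioi 0) => ne_of_gt hx))
  have t1' := t1.mono_left (nhdsWithin_mono π (fun x (hx : x ∈ Set.Iio π) => ne_of_lt hx))
  have hcont : ContinuousOn (fun x => deriv f x / Real.sin x) (Set.Ioo 0 π) := by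
    apply ContinuousOn.div hd.continuous.continuousOn Real.continuous_sin.continuousOn
    intro x hx
    exact (Real.sin_pos_of_mem_Ioo hx).ne'
  have hext := continuousOn_Icc_extendFrom_Ioo hcont t0' t1'
  have e0 := eq_lim_at_left_extendFrom_Ioo Real.pi_pos t0'
  have e1 := eq_lim_at_right_extendFrom_Ioo Real.pi_pos t1'
  have hi : ∀ x ∈ Set.Ioo (0:ℝ) π, extendFrom (Set.Ioo 0 π) (fun x => deriv f x / Real.sin x) x
      = deriv f x / Real.sin x := by
    intro x hx
    exact extendFrom_eq (subset_closure hx) (hcont x hx)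
  obtain ⟨a, ha, hamin⟩ := isCompact_Icc.exists_isMinOn (Set.nonempty_Icc.2 Real.pi_pos.le) hext
  obtain ⟨b, hb, hbmax⟩ := isCompact_Icc.exists_isMaxOn (Set.nonempty_Icc.2 Real.pi_pos.le) hext
  have hpos : ∀ x ∈ Set.Icc (0:ℝ) π,
      0 < extendFrom (Set.Ioo 0 π) (fun x => deriv f x / Real.sin x) x := by
    intro x hx
    rcases eq_or_lt_of_le hx.1 with h | h
    · subst h; rw [e0]; simpa using hf.deriv2_zero
    rcases eq_or_lt_of_le hx.2 with h' | h'
    · subst h'; rw [e1]; have := hf.deriv2_pi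
      simp; linarith
    · rw [hi x ⟨h, h'⟩]
      exact div_pos (hf.deriv_pos x ⟨h, h'⟩) (Real.sin_pos_of_mem_Ioo ⟨h, h'⟩)
  refine ⟨_, hpos a ha, _, hpos b hb, fun x hx => ?_⟩
  rw [← hi x hx]
  exact ⟨hamin (Set.Ioo_subset_Icc_self hx), hbmax (Set.Ioo_subset_Icc_self hx)⟩

lemma cauchy_cos (u u' : ℝ → ℝ) (a b : ℝ) (hab : a < b) (hc : ContinuousOn u (Set.Icc a b))
    (hd : ∀ x ∈ Set.Ioo a b, HasDerivAt u (u' x) x) :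
    ∃ z ∈ Set.Ioo a b, (u b - u a) * Real.sin z = (Real.cos a - Real.cos b) * u' z := by
  obtain ⟨c, hc, h⟩ := exists_ratio_hasDerivAt_eq_ratio_slope u u' hab hc hd Real.cos
    (fun x => - Real.sin x) Real.continuous_cos.continuousOn (fun x _ => Real.hasDerivAt_cos x)
  exact ⟨c, hc, by linarith⟩

/-- unordered version -/
lemma cauchy_cos' (u u' : ℝ → ℝ) (a b : ℝ) (hab : a ≠ b) (hc : ContinuousOn u (Set.uIcc a b))
    (hd : ∀ x ∈ Set.Ioo (min a b) (max a b), HasDerivAt u (u' x) x) :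
    ∃ z ∈ Set.Ioo (min a b) (max a b),
      (u b - u a) * Real.sin z = (Real.cos a - Real.cos b) * u' z := by
  rcases lt_or_gt_of_ne hab with h | h
  · rw [Set.uIcc_of_le h.le] at hc
    rw [min_eq_left h.le, max_eq_right h.le] at *
    exact cauchy_cos u u' a b h hc hd
  · rw [Set.uIcc_of_ge h.le] at hc
    rw [min_eq_right h.le, max_eq_left h.le] at *
    obtain ⟨z, hz, e⟩ := cauchy_cos u u' b a h hc hd
    exact ⟨z, hz, by linarith⟩

/-- cosine distance monotone -/
lemma cos_between (a b z : ℝ) (ha : a ∈ Set.Icc (0:ℝ) π) (hb : b ∈ Set.Icc (0:ℝ) π)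
    (hz : z ∈ Set.Ioo (min a b) (max a b)) :
    |Real.cos a - Real.cos z| ≤ |Real.cos a - Real.cos b| := by
  rcases le_total a b with h | h
  · rw [min_eq_left h, max_eq_right h] at hz
    have h1 := Real.cos_le_cos_of_nonneg_of_le_pi ha.1 (hz.2.le.trans hb.2) hz.1.le
    have h2 := Real.cos_le_cos_of_nonneg_of_le_pi (ha.1.trans hz.1.le) hb.2 hz.2.le
    rw [abs_of_nonneg, abs_of_nonneg] <;> linarith
  · rw [min_eq_right h, max_eq_left h] at hz
    have h1 := Real.cos_le_cos_of_nonneg_of_le_pi hb.1 (hz.2.le.trans ha.2) hz.1.le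
    have h2 := Real.cos_le_cos_of_nonneg_of_le_pi (hb.1.trans hz.1.le) ha.2 hz.2.le
    rw [abs_of_nonpos, abs_of_nonpos] <;> linarith

lemma sin_sq_le (a b : ℝ) : Real.sin a ^ 2 ≤ Real.sin b ^ 2 + 2 * |Real.cos a - Real.cos b| := by
  rw [Real.sin_sq, Real.sin_sq]
  have h1 : |Real.cos b + Real.cos a| ≤ 2 := by
    have := Real.neg_one_le_cos a; have := Real.cos_le_one a
    have := Real.neg_one_le_cos b; have := Real.cos_le_one b
    rw [abs_le]; constructor <;> linarith
  have h2 : Real.cos b ^ 2 - Real.cos a ^ 2 ≤ |Real.cos b + Real.cos a| * |Real.cos a - Real.cos b| := by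
    rw [← abs_mul, ← abs_neg]
    refine le_trans (le_of_eq ?_) (le_abs_self _)
    ring
  have := mul_le_mul_of_nonneg_right h1 (abs_nonneg (Real.cos a - Real.cos b))
  linarith

lemma key_half {α : ℝ} {f : ℝ → ℝ} (hf : IsSimpleLoop α f) :
    ∃ m > (0:ℝ), ∃ M > (0:ℝ), ∃ C > (0:ℝ), ∀ s ∈ Set.Ioo (0:ℝ) π,
      (m ≤ deriv f s / (2 * Real.sin s) ∧ deriv f s / (2 * Real.sin s) ≤ M) ∧
      ∀ σ ∈ Set.Icc (0:ℝ) π, Real.cos σ ≠ Real.cos s →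
        m ≤ qf f s σ ∧ qf f s σ ≤ M ∧
        |qf f s σ - deriv f s / (2 * Real.sin s)| * (Real.sin σ ^ 2 + Real.sin s ^ 2)
          ≤ C * |Real.cos s - Real.cos σ| := by
  obtain ⟨m, hm, M, hM, hb⟩ := phi_bounds hf
  have hd : ContDiff ℝ 1 (deriv f) := contDiff_deriv1 hf.smooth
  have hdf : ∀ x, HasDerivAt f (deriv f x) x := fun x =>
    (hf.smooth.differentiable (by norm_num) x).hasDerivAt
  have hdd : ∀ x, HasDerivAt (deriv f) (deriv (deriv f) x) x := fun x =>
    (hd.differentiable (by norm_num) x).hasDerivAt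
  have hddc : Continuous (deriv (deriv f)) := hd.continuous_deriv (by norm_num)
  obtain ⟨B, hB⟩ := (isCompact_Icc (a := (0:ℝ)) (b := π)).exists_bound_of_continuousOn
    hddc.continuousOn
  have hB0 : 0 ≤ B := (norm_nonneg _).trans (hB 0 ⟨le_rfl, Real.pi_pos.le⟩)
  -- derivative of the ratio
  have hphi : ∀ x ∈ Set.Ioo (0:ℝ) π, HasDerivAt (fun x => deriv f x / Real.sin x)
      ((deriv (deriv f) x * Real.sin x - deriv f x * Real.cos x) / Real.sin x ^ 2) x := by
    intro x hx
    exact (hdd x).div (Real.hasDerivAt_sin x) (Real.sin_pos_of_mem_Ioo hx).ne'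
  have hphib : ∀ x ∈ Set.Ioo (0:ℝ) π,
      |(deriv (deriv f) x * Real.sin x - deriv f x * Real.cos x) / Real.sin x ^ 2| * Real.sin x
        ≤ B + M := by
    intro x hx
    have hsx := Real.sin_pos_of_mem_Ioo hx
    have e : (deriv (deriv f) x * Real.sin x - deriv f x * Real.cos x) / Real.sin x ^ 2
        = (deriv (deriv f) x - deriv f x / Real.sin x * Real.cos x) / Real.sin x := by
      field_simp
    rw [e, abs_div, abs_of_pos hsx, div_mul_cancel₀ _ hsx.ne']
    refine (abs_sub _ _).trans (add_le_add (hB x (Set.Ioo_subset_Icc_self hx)) ?_)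
    rw [abs_mul, abs_of_pos (hm.trans_le (hb x hx).1)]
    calc _ ≤ M * 1 := mul_le_mul (hb x hx).2 (Real.abs_cos_le_one x) (abs_nonneg _) hM.le
      _ = M := mul_one M
  refine ⟨m / 2, by positivity, M / 2, by positivity, 8 * (B + M), by positivity, fun s hs => ?_⟩
  have hss := Real.sin_pos_of_mem_Ioo hs
  have es : deriv f s / (2 * Real.sin s) = deriv f s / Real.sin s / 2 := by field_simp
  refine ⟨?_, fun σ hσ hne => ?_⟩
  · rw [es]; constructor <;> linarith [(hb s hs).1, (hb s hs).2]
  have hsI := Set.Ioo_subset_Icc_self hs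
  have hne' : s ≠ σ := fun h => hne (by rw [h])
  have hcne : Real.cos s - Real.cos σ ≠ 0 := sub_ne_zero.2 (Ne.symm hne)
  have hsub : ∀ z, z ∈ Set.Ioo (min s σ) (max s σ) → z ∈ Set.Ioo (0:ℝ) π := fun z hz =>
    ⟨(le_min hs.1.le hσ.1).trans_lt hz.1, hz.2.trans_le (max_le hs.2.le hσ.2)⟩
  obtain ⟨ξ, hξ, eξ⟩ := cauchy_cos' f (deriv f) s σ hne' hf.smooth.continuous.continuousOn
    (fun x _ => hdf x)
  have hξI := hsub ξ hξ
  have hsξ := Real.sin_pos_of_mem_Ioo hξI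
  have eq : qf f s σ = deriv f ξ / Real.sin ξ / 2 := by
    unfold qf
    field_simp
    linarith
  have hq1 : m / 2 ≤ qf f s σ := by rw [eq]; linarith [(hb ξ hξI).1]
  have hq2 : qf f s σ ≤ M / 2 := by rw [eq]; linarith [(hb ξ hξI).2]
  refine ⟨hq1, hq2, ?_⟩
  have hA : |qf f s σ - deriv f s / (2 * Real.sin s)| ≤ M / 2 := by
    rw [es, abs_le]
    constructor <;> linarith [(hb s hs).1, (hb s hs).2]
  have hBd : |qf f s σ - deriv f s / (2 * Real.sin s)| * Real.sin s ^ 2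
      ≤ 2 * (B + M) * |Real.cos s - Real.cos σ| := by
    rcases le_total (Real.sin s ^ 2) (4 * |Real.cos s - Real.cos σ|) with h | h
    · calc _ ≤ M / 2 * (4 * |Real.cos s - Real.cos σ|) :=
            mul_le_mul hA h (by positivity) (by positivity)
        _ = 2 * M * |Real.cos s - Real.cos σ| := by ring
        _ ≤ _ := by gcongr; linarith
    · have hneξ : s ≠ ξ := by
        rintro rfl
        rcases le_total s σ with h | h
        · simp [h] at hξ
        · simp [h] at hξ
      have hsub2 : ∀ z, z ∈ Set.Ioo (min s ξ) (max s ξ) → z ∈ Set.Ioo (min s σ) (max s σ) :=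
        fun z hz => ⟨(le_min (min_le_left _ _) hξ.1.le).trans_lt hz.1,
          hz.2.trans_le (max_le (le_max_left _ _) hξ.2.le)⟩
      have hcont : ContinuousOn (fun x => deriv f x / Real.sin x) (Set.uIcc s ξ) := by
        intro x hx
        refine (hphi x ?_).continuousAt.continuousWithinAt
        rw [Set.uIcc, Set.mem_Icc] at hx
        exact ⟨(lt_min hs.1 hξI.1).trans_le hx.1, hx.2.trans_lt (max_lt hs.2 hξI.2)⟩
      obtain ⟨z, hz, ez⟩ := cauchy_cos' _ _ s ξ hneξ hcont
        (fun x hx => hphi x (hsub x (hsub2 x hx)))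
      have hzI := hsub z (hsub2 z hz)
      have hsz := Real.sin_pos_of_mem_Ioo hzI
      have hc1 := cos_between s σ ξ hsI hσ hξ
      have hc2 := cos_between s σ z hsI hσ (hsub2 z hz)
      have hsq := sin_sq_le s z
      have hsz2 : Real.sin s ^ 2 ≤ 2 * Real.sin z ^ 2 := by linarith
      have hpb := hphib z hzI
      have ez' := congrArg abs ez
      simp only [abs_mul, abs_of_pos hsz] at ez'
      rw [eq, es, ← sub_div, abs_div, abs_two]
      set P := |deriv f ξ / Real.sin ξ - deriv f s / Real.sin s| with hP
      have hP0 : 0 ≤ P := abs_nonneg _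
      set Q := |(deriv (deriv f) z * Real.sin z - deriv f z * Real.cos z) / Real.sin z ^ 2|
      have k1 : P * Real.sin z ^ 2 ≤ |Real.cos s - Real.cos σ| * (B + M) := by
        calc P * Real.sin z ^ 2 = (P * Real.sin z) * Real.sin z := by ring
          _ = |Real.cos s - Real.cos ξ| * (Q * Real.sin z) := by rw [ez']; ring
          _ ≤ _ := mul_le_mul hc1 hpb (by positivity) (abs_nonneg _)
      have k2 : P * Real.sin s ^ 2 ≤ P * (2 * Real.sin z ^ 2) :=
        mul_le_mul_of_nonneg_left hsz2 hP0
      have k3 : 0 ≤ |Real.cos s - Real.cos σ| * (B + M) := by positivity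
      linarith
  have hsq := sin_sq_le σ s
  rw [abs_sub_comm (Real.cos σ)] at hsq
  set D := |qf f s σ - deriv f s / (2 * Real.sin s)|
  have hD0 : 0 ≤ D := abs_nonneg _
  have k0 : 0 ≤ |Real.cos s - Real.cos σ| := abs_nonneg _
  have k1 := mul_le_mul_of_nonneg_left hsq hD0
  have k2 := mul_le_mul_of_nonneg_right hA k0
  have k3 : 0 ≤ |Real.cos s - Real.cos σ| * B := by positivity
  have k4 : 0 ≤ |Real.cos s - Real.cos σ| * M := by positivity
  nlinarith

lemma key {α : ℝ} {f : ℝ → ℝ} (hf : IsSimpleLoop α f) :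
    ∃ m > (0:ℝ), ∃ M > (0:ℝ), ∃ C > (0:ℝ), ∀ s ∈ Set.Ioo (0:ℝ) π,
      (m ≤ deriv f s / (2 * Real.sin s) ∧ deriv f s / (2 * Real.sin s) ≤ M) ∧
      ∀ σ ∈ Set.Icc (0:ℝ) (2 * π), Real.cos σ ≠ Real.cos s →
        m ≤ qf f s σ ∧ qf f s σ ≤ M ∧
        |qf f s σ - deriv f s / (2 * Real.sin s)| * (Real.sin σ ^ 2 + Real.sin s ^ 2)
          ≤ C * |Real.cos s - Real.cos σ| := by
  obtain ⟨m, hm, M, hM, C, hC, h⟩ := key_half hf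
  refine ⟨m, hm, M, hM, C, hC, fun s hs => ⟨(h s hs).1, fun σ hσ hne => ?_⟩⟩
  rcases le_total σ π with h1 | h1
  · exact (h s hs).2 σ ⟨hσ.1, h1⟩ hne
  · have := (h s hs).2 (2 * π - σ) ⟨by linarith [hσ.2], by linarith⟩
      (by rwa [Real.cos_two_pi_sub])
    unfold qf at *
    rw [Real.cos_two_pi_sub, Real.sin_two_pi_sub, hf.symm, neg_sq] at this
    exact this

/-- The truncated domain of integration. -/
def cutSet (s ε : ℝ) : Set ℝ :=
  Set.Icc (0:ℝ) (2*π) \ (Set.Ioo (s-ε) (s+ε) ∪ Set.Ioo (2*π-s-ε) (2*π-s+ε))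

lemma cos_ne_of {s σ : ℝ} (hs : s ∈ Set.Ioo (0:ℝ) π) (hσ : σ ∈ Set.Icc (0:ℝ) (2*π))
    (h1 : σ ≠ s) (h2 : σ ≠ 2*π - s) : Real.cos σ ≠ Real.cos s := by
  intro h
  rcases le_total σ π with h' | h'
  · exact h1 (Real.injOn_cos ⟨hσ.1, h'⟩ (Set.Ioo_subset_Icc_self hs) h)
  · rw [← Real.cos_two_pi_sub σ] at h
    have := Real.injOn_cos ⟨by linarith [hσ.2], by linarith⟩ (Set.Ioo_subset_Icc_self hs) h
    exact h2 (by linarith)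

lemma cutSet_cos_ne {s ε σ : ℝ} (hs : s ∈ Set.Ioo (0:ℝ) π) (hε : 0 < ε) (hσ : σ ∈ cutSet s ε) :
    Real.cos σ ≠ Real.cos s := by
  refine cos_ne_of hs hσ.1 ?_ ?_
  · rintro rfl
    exact hσ.2 (Or.inl ⟨by linarith, by linarith⟩)
  · rintro rfl
    exact hσ.2 (Or.inr ⟨by linarith, by linarith⟩)

lemma cutSet_compact (s ε : ℝ) : IsCompact (cutSet s ε) :=
  isCompact_Icc.diff (isOpen_Ioo.union isOpen_Ioo)

lemma cutSet_meas (s ε : ℝ) : MeasurableSet (cutSet s ε) := (cutSet_compact s ε).measurableSet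

/-- Antiderivative of the kernel. -/
noncomputable def antiA (s σ : ℝ) : ℝ :=
  Real.log (Real.sin ((σ - s) / 2)) - Real.log (Real.sin ((σ + s) / 2))

lemma cos_sub_cos_half (s σ : ℝ) : Real.cos s - Real.cos σ
    = 2 * Real.sin ((σ + s) / 2) * Real.sin ((σ - s) / 2) := by
  rw [Real.cos_sub_cos, show (s - σ) / 2 = -((σ - s) / 2) by ring, Real.sin_neg, add_comm s σ]
  ring

lemma antiA_deriv {s σ : ℝ} (h : Real.cos σ ≠ Real.cos s) :
    HasDerivAt (antiA s) (Real.sin s / (Real.cos s - Real.cos σ)) σ := by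
  have h0 : Real.cos s - Real.cos σ ≠ 0 := sub_ne_zero.2 (Ne.symm h)
  rw [cos_sub_cos_half] at h0
  have h1 : Real.sin ((σ + s) / 2) ≠ 0 := fun e => h0 (by rw [e]; ring)
  have h2 : Real.sin ((σ - s) / 2) ≠ 0 := fun e => h0 (by rw [e]; ring)
  have d1 : HasDerivAt (fun x : ℝ => (x - s) / 2) (1 / 2) σ :=
    ((hasDerivAt_id σ).sub_const s).div_const 2
  have d2 : HasDerivAt (fun x : ℝ => (x + s) / 2) (1 / 2) σ :=
    ((hasDerivAt_id σ).add_const s).div_const 2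
  have := (d1.sin.log h2).sub (d2.sin.log h1)
  refine this.congr_deriv ?_
  rw [cos_sub_cos_half]
  have e : Real.sin s = Real.sin ((σ + s) / 2) * Real.cos ((σ - s) / 2)
      - Real.cos ((σ + s) / 2) * Real.sin ((σ - s) / 2) := by
    rw [← Real.sin_sub]; congr 1; ring
  rw [e]
  field_simp

lemma kernel_cont {s : ℝ} {S : Set ℝ} (h : ∀ σ ∈ S, Real.cos σ ≠ Real.cos s) (c : ℝ) :
    ContinuousOn (fun σ => c / (Real.cos s - Real.cos σ)) S := by
  refine ContinuousOn.div continuousOn_const (by fun_prop) ?_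
  intro σ hσ
  exact sub_ne_zero.2 (Ne.symm (h σ hσ))

lemma kernel_piece {s a b : ℝ} (hab : a ≤ b) (h : ∀ σ ∈ Set.Icc a b, Real.cos σ ≠ Real.cos s) :
    ∫ σ in Set.Icc a b, Real.sin s / (Real.cos s - Real.cos σ) = antiA s b - antiA s a := by
  rw [integral_Icc_eq_integral_Ioc, ← intervalIntegral.integral_of_le hab]
  apply intervalIntegral.integral_eq_sub_of_hasDerivAt
  · intro x hx
    rw [Set.uIcc_of_le hab] at hx
    exact antiA_deriv (h x hx)
  · apply ContinuousOn.intervalIntegrable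
    rw [Set.uIcc_of_le hab]
    exact kernel_cont h _

lemma kernel_cut {s ε : ℝ} (hs : s ∈ Set.Ioo (0:ℝ) π) (hε : 0 < ε) (h1 : ε < s) (h2 : ε < π - s) :
    ∫ σ in cutSet s ε, Real.sin s / (Real.cos s - Real.cos σ)
      = 2 * (Real.log (Real.sin (s + ε / 2)) - Real.log (Real.sin (s - ε / 2))) := by
  obtain ⟨hs1, hs2⟩ := hs
  have hset : cutSet s ε = Set.Icc 0 (s - ε) ∪ (Set.Icc (s + ε) (2*π - s - ε)
      ∪ Set.Icc (2*π - s + ε) (2*π)) := by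
    ext x
    simp only [cutSet, Set.mem_sdiff, Set.mem_union, Set.mem_Icc, Set.mem_Ioo, not_or, not_and_or,
      not_lt]
    constructor
    · rintro ⟨⟨a1, a2⟩, (a3 | a3), (a4 | a4)⟩
      · exact Or.inl ⟨a1, a3⟩
      · exact Or.inl ⟨a1, a3⟩
      · exact Or.inr (Or.inl ⟨a3, a4⟩)
      · exact Or.inr (Or.inr ⟨a4, a2⟩)
    · rintro (⟨a1, a2⟩ | ⟨a1, a2⟩ | ⟨a1, a2⟩)
      · exact ⟨⟨a1, by linarith⟩, Or.inl a2, Or.inl (by linarith)⟩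
      · exact ⟨⟨by linarith, by linarith⟩, Or.inr a1, Or.inl a2⟩
      · exact ⟨⟨by linarith, by linarith⟩, Or.inr (by linarith), Or.inr a1⟩
  have hne : ∀ σ ∈ cutSet s ε, Real.cos σ ≠ Real.cos s := fun σ hσ =>
    cutSet_cos_ne ⟨hs1, hs2⟩ hε hσ
  have hintg : IntegrableOn (fun σ => Real.sin s / (Real.cos s - Real.cos σ)) (cutSet s ε) :=
    (kernel_cont hne _).integrableOn_compact (cutSet_compact s ε)
  rw [hset] at hne hintg ⊢
  rw [setIntegral_union _ (measurableSet_Icc.union measurableSet_Icc)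
    (hintg.mono_set Set.subset_union_left) (hintg.mono_set Set.subset_union_right),
    setIntegral_union _ measurableSet_Icc
    (hintg.mono_set (Set.subset_union_left.trans Set.subset_union_right))
    (hintg.mono_set (Set.subset_union_right.trans Set.subset_union_right)),
    kernel_piece (by linarith) (fun σ hσ => hne σ (Or.inl hσ)),
    kernel_piece (by linarith) (fun σ hσ => hne σ (Or.inr (Or.inl hσ))),
    kernel_piece (by linarith) (fun σ hσ => hne σ (Or.inr (Or.inr hσ)))]
  · unfold antiA
    rw [show (s - ε - s) / 2 = -(ε / 2) by ring, show (s - ε + s) / 2 = s - ε / 2 by ring,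
      show (0 - s) / 2 = -(s / 2) by ring, show (0 + s) / 2 = s / 2 by ring,
      show (2 * π - s - ε - s) / 2 = π - (s + ε / 2) by ring,
      show (2 * π - s - ε + s) / 2 = π - ε / 2 by ring,
      show (s + ε - s) / 2 = ε / 2 by ring, show (s + ε + s) / 2 = s + ε / 2 by ring,
      show (2 * π - s) / 2 = π - s / 2 by ring, show (2 * π + s) / 2 = s / 2 + π by ring,
      show (2 * π - s + ε - s) / 2 = π - (s - ε / 2) by ring,
      show (2 * π - s + ε + s) / 2 = ε / 2 + π by ring]
    simp only [Real.sin_neg, Real.sin_pi_sub, Real.sin_add_pi, Real.log_neg_eq_log]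
    ring
  · rw [Set.disjoint_left]
    rintro x ⟨a1, a2⟩ ⟨a3, a4⟩
    linarith
  · rw [Set.disjoint_left]
    rintro x ⟨a1, a2⟩ (⟨a3, a4⟩ | ⟨a3, a4⟩) <;> linarith

lemma kernel_tendsto {s : ℝ} (hs : s ∈ Set.Ioo (0:ℝ) π) (c : ℝ) :
    Tendsto (fun ε => ∫ σ in cutSet s ε, c / (Real.cos s - Real.cos σ)) (𝓝[>] 0) (𝓝 0) := by
  have hss := Real.sin_pos_of_mem_Ioo hs
  have ht : Tendsto (fun ε : ℝ => c / Real.sin s *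
      (2 * (Real.log (Real.sin (s + ε / 2)) - Real.log (Real.sin (s - ε / 2))))) (𝓝[>] 0)
      (𝓝 0) := by
    have hc : ContinuousAt (fun ε : ℝ => c / Real.sin s *
      (2 * (Real.log (Real.sin (s + ε / 2)) - Real.log (Real.sin (s - ε / 2))))) 0 := by
      have e1 : ContinuousAt (fun ε : ℝ => Real.log (Real.sin (s + ε / 2))) 0 :=
        ContinuousAt.log (by fun_prop) (by simpa using hss.ne')
      have e2 : ContinuousAt (fun ε : ℝ => Real.log (Real.sin (s - ε / 2))) 0 :=
        ContinuousAt.log (by fun_prop) (by simpa using hss.ne')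
      exact continuousAt_const.mul (continuousAt_const.mul (e1.sub e2))
    have := hc.tendsto
    simp only [zero_div, add_zero, sub_zero, sub_self, mul_zero] at this
    exact this.mono_left nhdsWithin_le_nhds
  refine ht.congr' ?_
  have hm : (0:ℝ) < min s (π - s) := lt_min hs.1 (by linarith [hs.2])
  filter_upwards [Ioo_mem_nhdsGT hm] with ε hε
  rw [← kernel_cut hs hε.1 (hε.2.trans_le (min_le_left _ _)) (hε.2.trans_le (min_le_right _ _)),
    ← integral_const_mul]
  congr 1
  ext σ
  field_simp

lemma G_integrable {s : ℝ} (q : ℝ → ℝ) (hq : Measurable q) (c Λ : ℝ)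
    (hΛ : 0 ≤ Λ)
    (hb : ∀ σ ∈ Set.Icc (0:ℝ) (2*π), Real.cos σ ≠ Real.cos s →
      |q σ - c| ≤ Λ * |Real.cos s - Real.cos σ|) :
    IntegrableOn (fun σ => (q σ - c) / (Real.cos s - Real.cos σ)) (Set.Icc 0 (2*π)) := by
  refine Measure.integrableOn_of_bounded (M := Λ) (measure_Icc_lt_top.ne) ?_ ?_
  · have : Measurable (fun σ => (q σ - c) / (Real.cos s - Real.cos σ)) := by fun_prop
    exact this.aestronglyMeasurable
  · refine (ae_restrict_iff' measurableSet_Icc).2 (Eventually.of_forall fun σ hσ => ?_)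
    by_cases h : Real.cos σ = Real.cos s
    · simp [h, hΛ]
    · have h0 : 0 < |Real.cos s - Real.cos σ| := abs_pos.2 (sub_ne_zero.2 (Ne.symm h))
      rw [Real.norm_eq_abs, abs_div, div_le_iff₀ h0]
      exact hb σ hσ h

lemma pv_eq {s : ℝ} (hs : s ∈ Set.Ioo (0:ℝ) π) (u q : ℝ → ℝ) (hq : Measurable q) (c Λ : ℝ)
    (hΛ : 0 ≤ Λ)
    (hb : ∀ σ ∈ Set.Icc (0:ℝ) (2*π), Real.cos σ ≠ Real.cos s →
      |q σ - c| ≤ Λ * |Real.cos s - Real.cos σ|)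
    (hu : ∀ σ ∈ Set.Icc (0:ℝ) (2*π), Real.cos σ ≠ Real.cos s →
      u σ = q σ / (Real.cos s - Real.cos σ)) :
    pvIntegral2 u s = ∫ σ in Set.Icc 0 (2*π), (q σ - c) / (Real.cos s - Real.cos σ) := by
  have hG := G_integrable q hq c Λ hΛ hb
  unfold pvIntegral2
  apply Tendsto.limUnder_eq
  have h1 : Tendsto (fun ε => ∫ σ in cutSet s ε, (q σ - c) / (Real.cos s - Real.cos σ)) (𝓝[>] 0)
      (𝓝 (∫ σ in Set.Icc 0 (2*π), (q σ - c) / (Real.cos s - Real.cos σ))) := by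
    have e : ∀ ε, ∫ σ in cutSet s ε, (q σ - c) / (Real.cos s - Real.cos σ)
        = ∫ σ in Set.Icc 0 (2*π), (cutSet s ε).indicator
          (fun σ => (q σ - c) / (Real.cos s - Real.cos σ)) σ := by
      intro ε
      rw [setIntegral_indicator (cutSet_meas s ε),
        Set.inter_eq_right.2 (show cutSet s ε ⊆ Set.Icc 0 (2*π) from Set.sdiff_subset)]
    simp only [e]
    refine tendsto_integral_filter_of_dominated_convergence _ ?_ ?_ hG.norm ?_
    · exact Eventually.of_forall fun ε => hG.aestronglyMeasurable.indicator (cutSet_meas s ε)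
    · exact Eventually.of_forall fun ε => Eventually.of_forall fun σ =>
        norm_indicator_le_norm_self _ _
    · have hnull : ∀ᵐ σ ∂(volume.restrict (Set.Icc (0:ℝ) (2*π))), σ ∉ ({s, 2*π - s} : Set ℝ) :=
        measure_eq_zero_iff_ae_notMem.1
          (le_antisymm ((Measure.restrict_apply_le _ _).trans
            (le_of_eq ((Set.toFinite ({s, 2*π - s} : Set ℝ)).measure_zero volume))) zero_le)
      filter_upwards [hnull, ae_restrict_mem measurableSet_Icc] with σ h1 h2
      simp only [Set.mem_insert_iff, Set.mem_singleton_iff, not_or] at h1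
      have hm : 0 < min |σ - s| |σ - (2*π - s)| :=
        lt_min (abs_pos.2 (sub_ne_zero.2 h1.1)) (abs_pos.2 (sub_ne_zero.2 h1.2))
      apply tendsto_const_nhds.congr'
      filter_upwards [Ioo_mem_nhdsGT hm] with ε hε
      rw [Set.indicator_of_mem]
      refine ⟨h2, ?_⟩
      have k1 := hε.2.trans_le (min_le_left _ _)
      have k2 := hε.2.trans_le (min_le_right _ _)
      rintro (⟨a, b⟩ | ⟨a, b⟩)
      · exact absurd (abs_lt.2 ⟨by linarith, by linarith⟩) (not_lt.2 k1.le)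
      · exact absurd (abs_lt.2 ⟨by linarith, by linarith⟩) (not_lt.2 k2.le)
  have h2 := h1.add (kernel_tendsto hs c)
  rw [add_zero] at h2
  refine h2.congr' ?_
  filter_upwards [self_mem_nhdsWithin] with ε hε
  have hε' : 0 < ε := hε
  have hne : ∀ σ ∈ cutSet s ε, Real.cos σ ≠ Real.cos s := fun σ hσ => cutSet_cos_ne hs hε' hσ
  rw [← integral_add (hG.mono_set (show cutSet s ε ⊆ Set.Icc 0 (2*π) from Set.sdiff_subset))
    ((kernel_cont hne c).integrableOn_compact (cutSet_compact s ε))]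
  refine setIntegral_congr_fun (cutSet_meas s ε) fun σ hσ => ?_
  rw [hu σ hσ.1 (hne σ hσ), ← add_div, sub_add_cancel]

lemma atan_piece (p a : ℝ) (ha : 0 < a) :
    IntegrableOn (fun σ : ℝ => a / (a ^ 2 + (2 / π * (σ - p)) ^ 2)) (Set.Icc 0 (2*π)) ∧
    ∫ σ in Set.Icc (0:ℝ) (2*π), a / (a ^ 2 + (2 / π * (σ - p)) ^ 2) ≤ π ^ 2 := by
  have hpi := Real.pi_pos
  have hc : Continuous (fun σ : ℝ => a / (a ^ 2 + (2 / π * (σ - p)) ^ 2)) := by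
    refine Continuous.div continuous_const (by fun_prop) ?_
    intro x; positivity
  refine ⟨hc.continuousOn.integrableOn_compact isCompact_Icc, ?_⟩
  rw [integral_Icc_eq_integral_Ioc, ← intervalIntegral.integral_of_le (by positivity)]
  have hd : ∀ x ∈ Set.uIcc (0:ℝ) (2*π), HasDerivAt
      (fun x => π / 2 * Real.arctan (2 / π * (x - p) / a)) (a / (a ^ 2 + (2 / π * (x - p)) ^ 2))
      x := by
    intro x _
    have d1 : HasDerivAt (fun x : ℝ => 2 / π * (x - p) / a) (2 / π * 1 / a) x :=
      ((((hasDerivAt_id x).sub_const p).const_mul (2 / π)).div_const a)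
    refine (d1.arctan.const_mul (π / 2)).congr_deriv ?_
    have : a ^ 2 + (2 / π * (x - p)) ^ 2 ≠ 0 := by positivity
    have e : 1 + (2 / π * (x - p) / a) ^ 2 = (a ^ 2 + (2 / π * (x - p)) ^ 2) / a ^ 2 := by
      field_simp
    rw [e]
    field_simp
  rw [intervalIntegral.integral_eq_sub_of_hasDerivAt hd (hc.intervalIntegrable _ _)]
  have b1 := Real.arctan_lt_pi_div_two (2 / π * (2 * π - p) / a)
  have b2 := Real.neg_pi_div_two_lt_arctan (2 / π * (0 - p) / a)
  nlinarith

lemma sin_lower (σ p a : ℝ) (ha : 0 < a) (h : |σ - p| ≤ π / 2)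
    (hp : Real.sin (σ - p) ^ 2 = Real.sin σ ^ 2) :
    a / (Real.sin σ ^ 2 + a ^ 2) ≤ a / (a ^ 2 + (2 / π * (σ - p)) ^ 2) := by
  have hpi := Real.pi_pos
  have h1 := Real.mul_abs_le_abs_sin h
  have h2 : (2 / π * (σ - p)) ^ 2 ≤ Real.sin σ ^ 2 := by
    rw [← hp, sq_le_sq, abs_mul, abs_of_pos (by positivity : (0:ℝ) < 2 / π)]
    exact h1
  apply div_le_div_of_nonneg_left ha.le (by positivity)
  linarith

lemma sin_int_bound (a : ℝ) (ha : 0 < a) :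
    IntegrableOn (fun σ : ℝ => a / (Real.sin σ ^ 2 + a ^ 2)) (Set.Icc 0 (2*π)) ∧
    ∫ σ in Set.Icc (0:ℝ) (2*π), a / (Real.sin σ ^ 2 + a ^ 2) ≤ 3 * π ^ 2 := by
  have hpi := Real.pi_pos
  have hc : Continuous (fun σ : ℝ => a / (Real.sin σ ^ 2 + a ^ 2)) := by
    refine Continuous.div continuous_const (by fun_prop) ?_
    intro x; positivity
  have hI : IntegrableOn (fun σ : ℝ => a / (Real.sin σ ^ 2 + a ^ 2)) (Set.Icc 0 (2*π)) :=
    hc.continuousOn.integrableOn_compact isCompact_Icc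
  refine ⟨hI, ?_⟩
  obtain ⟨i0, b0⟩ := atan_piece 0 a ha
  obtain ⟨i1, b1⟩ := atan_piece π a ha
  obtain ⟨i2, b2⟩ := atan_piece (2*π) a ha
  have hle : ∫ σ in Set.Icc (0:ℝ) (2*π), a / (Real.sin σ ^ 2 + a ^ 2) ≤
      ∫ σ in Set.Icc (0:ℝ) (2*π), (a / (a ^ 2 + (2 / π * (σ - 0)) ^ 2)
        + (a / (a ^ 2 + (2 / π * (σ - π)) ^ 2) + a / (a ^ 2 + (2 / π * (σ - 2*π)) ^ 2))) := by
    refine setIntegral_mono_on hI (i0.add (i1.add i2)) measurableSet_Icc ?_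
    intro σ hσ
    have p0 : 0 ≤ a / (a ^ 2 + (2 / π * (σ - 0)) ^ 2) := by positivity
    have p1 : 0 ≤ a / (a ^ 2 + (2 / π * (σ - π)) ^ 2) := by positivity
    have p2 : 0 ≤ a / (a ^ 2 + (2 / π * (σ - 2*π)) ^ 2) := by positivity
    obtain ⟨l, r⟩ := hσ
    rcases le_total σ (π / 2) with h | h
    · have := sin_lower σ 0 a ha (by rw [abs_le]; constructor <;> linarith) (by simp)
      linarith
    rcases le_total σ (π + π / 2) with h' | h'
    · have := sin_lower σ π a ha (by rw [abs_le]; constructor <;> linarith)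
        (by rw [Real.sin_sub_pi]; ring)
      linarith
    · have := sin_lower σ (2*π) a ha (by rw [abs_le]; constructor <;> linarith)
        (by rw [Real.sin_sub_two_pi])
      linarith
  have e1 := integral_add i0 (i1.add i2)
  have e2 := integral_add i1 i2
  simp only [Pi.add_apply] at e1
  rw [e1, e2] at hle
  linarith

lemma log_lip {m x y : ℝ} (hm : 0 < m) (hx : m ≤ x) (hy : m ≤ y) :
    |Real.log x - Real.log y| ≤ |x - y| / m := by
  have key : ∀ x y : ℝ, m ≤ x → m ≤ y → Real.log x - Real.log y ≤ |x - y| / m := by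
    intro x y hx hy
    have hx0 := hm.trans_le hx
    have hy0 := hm.trans_le hy
    rw [← Real.log_div hx0.ne' hy0.ne']
    have h1 := Real.log_le_sub_one_of_pos (div_pos hx0 hy0)
    have h2 : x / y - 1 = (x - y) / y := by field_simp
    have h3 : (x - y) / y ≤ |x - y| / y := by gcongr; exact le_abs_self _
    have h4 : |x - y| / y ≤ |x - y| / m := by gcongr
    linarith
  rw [abs_le]
  constructor
  · have := key y x hy hx
    rw [abs_sub_comm] at this
    linarith
  · exact key x y hx hy

lemma L_lip {X x y : ℝ} (hx : 0 ≤ x) (hy : 0 ≤ y) (hxX : x ≤ X) (hyX : y ≤ X) :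
    |(Real.log (1 + x) - x) - (Real.log (1 + y) - y)| ≤ X * |x - y| := by
  wlog h : x ≤ y generalizing x y
  · rw [abs_sub_comm, abs_sub_comm x y]
    exact this hy hx hyX hxX (le_of_not_ge h)
  have hx1 : 0 < 1 + x := by linarith
  have hy1 : 0 < 1 + y := by linarith
  have h1 := Real.log_le_sub_one_of_pos (div_pos hy1 hx1)
  have h2 := Real.log_le_sub_one_of_pos (div_pos hx1 hy1)
  rw [Real.log_div hy1.ne' hx1.ne'] at h1
  rw [Real.log_div hx1.ne' hy1.ne'] at h2
  have e1 : (1 + y) / (1 + x) - 1 ≤ y - x := by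
    rw [sub_le_iff_le_add, div_le_iff₀ hx1]; nlinarith
  have e2 : (1 + x) / (1 + y) - 1 ≤ X * (y - x) - (y - x) := by
    rw [sub_le_iff_le_add, div_le_iff₀ hy1]
    nlinarith [mul_nonneg (sub_nonneg.2 h) (sub_nonneg.2 hyX),
      mul_nonneg (mul_nonneg (sub_nonneg.2 h) hy) (hx.trans hxX)]
  rw [abs_of_nonpos (by linarith : x - y ≤ 0), abs_le]
  constructor <;> nlinarith

lemma bSymb_eq {f : ℝ → ℝ} {s σ : ℝ} (h : Real.cos σ ≠ Real.cos s) : bSymb f σ s = qf f s σ := by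
  unfold bSymb qf
  rw [if_neg h]

lemma qf_meas {f : ℝ → ℝ} (hf : Continuous f) (s : ℝ) : Measurable (qf f s) := by
  have := hf.measurable
  unfold qf
  fun_prop

lemma ratio_bound {a b a0 b0 m Ma Mb : ℝ} (hm : 0 < m) (hb : m ≤ b) (hb0 : m ≤ b0)
    (ha0 : |a0| ≤ Ma) (hb0M : |b0| ≤ Mb) :
    |a / b - a0 / b0| ≤ (Mb * |a - a0| + Ma * |b - b0|) / m ^ 2 := by
  have hbp := hm.trans_le hb
  have hb0p := hm.trans_le hb0
  have e : a / b - a0 / b0 = ((a - a0) * b0 - a0 * (b - b0)) / (b * b0) := by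
    field_simp; ring
  rw [e, abs_div, abs_of_pos (mul_pos hbp hb0p)]
  have h1 : |(a - a0) * b0 - a0 * (b - b0)| ≤ Mb * |a - a0| + Ma * |b - b0| := by
    refine (abs_sub _ _).trans ?_
    rw [abs_mul, abs_mul]
    have := mul_le_mul_of_nonneg_left hb0M (abs_nonneg (a - a0))
    have := mul_le_mul_of_nonneg_right ha0 (abs_nonneg (b - b0))
    linarith
  have h2 : m ^ 2 ≤ b * b0 := by nlinarith
  exact div_le_div₀ ((abs_nonneg _).trans h1) h1 (by positivity) h2

open Real in
/-- Lemma 3.1(i) (Lemma `lm:eta`(i)): `η_{f+gh}(s) = η_f(s) + ψ(s)h + O(h²)`. -/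
theorem eta_expansion_h (α : ℝ) (hα : 2 ≤ α) (f g : ℝ → ℝ)
    (hf : IsSimpleLoop α f) (hg : IsSimpleLoop α g)
    (hSL : ∀ n : ℕ, IsSimpleLoop α (fun θ => f θ + (1/(n+1:ℝ)) * g θ)) :
    ∃ C > (0:ℝ), ∃ N : ℕ, ∀ n ≥ N, ∀ s ∈ Set.Ioo (0:ℝ) π,
      |etaF (fun θ => f θ + (1/(n+1:ℝ)) * g θ) s - etaF f s - psiF f g s * (1/(n+1:ℝ))|
        ≤ C * (1/(n+1:ℝ))^2 := by
  obtain ⟨mf, hmf, Mf, hMf, Cf, hCf, kf⟩ := key hf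
  obtain ⟨mg, hmg, Mg, hMg, Cg, hCg, kg⟩ := key hg
  have hpi := Real.pi_pos
  set R := Mg / mf with hR
  set T := (Mf * Cg + Mg * Cf) / mf ^ 2 with hT
  have hRp : 0 < R := by positivity
  have hTp : 0 < T := by positivity
  refine ⟨R * T * (3 * π ^ 2) / (2 * π), by positivity, 0, fun n _ s hs => ?_⟩
  obtain ⟨⟨df1, df2⟩, kf'⟩ := kf s hs
  obtain ⟨⟨dg1, dg2⟩, kg'⟩ := kg s hs
  clear kf kg
  set h : ℝ := 1 / (n + 1 : ℝ) with hh
  have hp : 0 < h := by positivity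
  have hss := Real.sin_pos_of_mem_Ioo hs
  set df := deriv f s / (2 * Real.sin s)
  set dg := deriv g s / (2 * Real.sin s)
  have hdf : 0 < df := hmf.trans_le df1
  have hdg : 0 < dg := hmg.trans_le dg1
  have hqfm := qf_meas hf.smooth.continuous s
  have hqgm := qf_meas hg.smooth.continuous s
  have hsub : ∀ (D C : ℝ) (σ : ℝ), 0 ≤ D →
      D * (Real.sin σ ^ 2 + Real.sin s ^ 2) ≤ C * |Real.cos s - Real.cos σ| →
      D ≤ C / Real.sin s ^ 2 * |Real.cos s - Real.cos σ| := by
    intro D C σ hD hle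
    rw [div_mul_eq_mul_div, le_div_iff₀ (by positivity)]
    have : 0 ≤ D * Real.sin σ ^ 2 := by positivity
    nlinarith
  have lf : ∀ σ ∈ Set.Icc (0:ℝ) (2*π), Real.cos σ ≠ Real.cos s →
      |qf f s σ - df| ≤ Cf / Real.sin s ^ 2 * |Real.cos s - Real.cos σ| := fun σ hσ hne =>
    hsub _ _ σ (abs_nonneg _) (kf' σ hσ hne).2.2
  have lg : ∀ σ ∈ Set.Icc (0:ℝ) (2*π), Real.cos σ ≠ Real.cos s →
      |qf g s σ - dg| ≤ Cg / Real.sin s ^ 2 * |Real.cos s - Real.cos σ| := fun σ hσ hne =>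
    hsub _ _ σ (abs_nonneg _) (kg' σ hσ hne).2.2
  have habsf : |df| ≤ Mf := by rwa [abs_of_pos hdf]
  have habsg : |dg| ≤ Mg := by rwa [abs_of_pos hdg]
  -- the three principal values
  have b1 : ∀ σ ∈ Set.Icc (0:ℝ) (2*π), Real.cos σ ≠ Real.cos s →
      |Real.log (qf f s σ) - Real.log df| ≤
        (Cf / Real.sin s ^ 2 / mf) * |Real.cos s - Real.cos σ| := by
    intro σ hσ hne
    refine (log_lip hmf (kf' σ hσ hne).1 df1).trans ?_
    rw [div_mul_eq_mul_div _ _ |Real.cos s - Real.cos σ|]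
    refine div_le_div_of_nonneg_right ?_ (by positivity)
    exact lf σ hσ hne
  have b2 : ∀ σ ∈ Set.Icc (0:ℝ) (2*π), Real.cos σ ≠ Real.cos s →
      |Real.log (qf f s σ + h * qf g s σ) - Real.log (df + h * dg)| ≤
        ((Cf / Real.sin s ^ 2 + h * (Cg / Real.sin s ^ 2)) / mf) * |Real.cos s - Real.cos σ| := by
    intro σ hσ hne
    have hgp : 0 < qf g s σ := hmg.trans_le (kg' σ hσ hne).1
    refine (log_lip hmf ?_ ?_).trans ?_
    · have := (kf' σ hσ hne).1
      have : 0 < h * qf g s σ := by positivity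
      linarith
    · have : 0 < h * dg := by positivity
      linarith
    rw [div_mul_eq_mul_div _ _ |Real.cos s - Real.cos σ|]
    refine div_le_div_of_nonneg_right ?_ (by positivity)
    have e : qf f s σ + h * qf g s σ - (df + h * dg) = (qf f s σ - df) + h * (qf g s σ - dg) := by
      ring
    rw [e]
    refine (abs_add_le _ _).trans ?_
    rw [abs_mul, abs_of_pos hp]
    have := mul_le_mul_of_nonneg_left (lg σ hσ hne) hp.le
    have := lf σ hσ hne
    linarith
  have b3 : ∀ σ ∈ Set.Icc (0:ℝ) (2*π), Real.cos σ ≠ Real.cos s →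
      |qf g s σ / qf f s σ - dg / df| ≤
        ((Mf * (Cg / Real.sin s ^ 2) + Mg * (Cf / Real.sin s ^ 2)) / mf ^ 2)
          * |Real.cos s - Real.cos σ| := by
    intro σ hσ hne
    refine (ratio_bound hmf (kf' σ hσ hne).1 df1 habsg habsf).trans ?_
    rw [div_mul_eq_mul_div _ _ |Real.cos s - Real.cos σ|]
    refine div_le_div_of_nonneg_right ?_ (by positivity)
    have := mul_le_mul_of_nonneg_left (lg σ hσ hne) hMf.le
    have := mul_le_mul_of_nonneg_left (lf σ hσ hne) hMg.le
    linarith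
  have m1 : Measurable (fun σ => Real.log (qf f s σ)) := hqfm.log
  have m2 : Measurable (fun σ => Real.log (qf f s σ + h * qf g s σ)) :=
    (hqfm.add (hqgm.const_mul h)).log
  have m3 : Measurable (fun σ => qf g s σ / qf f s σ) := hqgm.div hqfm
  have i1 := G_integrable _ m1 _ _ (by positivity) b1
  have i2 := G_integrable _ m2 _ _ (by positivity) b2
  have i3 := G_integrable _ m3 _ _ (by positivity) b3
  have e1 := pv_eq hs (fun σ => Real.log (bSymb f σ s) / (Real.cos s - Real.cos σ)) _ m1 _ _
    (by positivity) b1 (fun σ _ hne => by simp only [bSymb_eq hne])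
  have e2 := pv_eq hs (fun σ => Real.log (bSymb (fun θ => f θ + h * g θ) σ s)
      / (Real.cos s - Real.cos σ)) _ m2 _ _ (by positivity) b2 (fun σ _ hne => by
      simp only [bSymb_eq hne]
      congr 2
      unfold qf
      ring)
  have e3 := pv_eq hs (fun σ => bSymb g σ s / (bSymb f σ s * (Real.cos s - Real.cos σ))) _ m3 _ _
    (by positivity) b3 (fun σ _ hne => by simp only [bSymb_eq hne]; rw [div_div])
  unfold etaF psiF
  rw [e1, e2, e3]
  obtain ⟨iS, bS⟩ := sin_int_bound (Real.sin s) hss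
  have hcomb : ∀ A B D : ℝ, Real.sin s / (2*π) * A - Real.sin s / (2*π) * B
      - Real.sin s / (2*π) * D * h = (1 / (2*π)) * (Real.sin s * (A - B - h * D)) := by
    intro A B D; ring
  have e4 := integral_sub (i2.sub i1) (i3.const_mul h)
  simp only [Pi.sub_apply] at e4
  rw [hcomb, ← integral_sub i2 i1, ← integral_const_mul, ← e4, ← integral_const_mul, abs_mul, abs_of_pos (by positivity : 0 < 1 / (2*π))]
  have hfin : |∫ σ in Set.Icc (0:ℝ) (2*π), Real.sin s *
      ((Real.log (qf f s σ + h * qf g s σ) - Real.log (df + h * dg)) / (Real.cos s - Real.cos σ)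
      - (Real.log (qf f s σ) - Real.log df) / (Real.cos s - Real.cos σ)
      - h * ((qf g s σ / qf f s σ - dg / df) / (Real.cos s - Real.cos σ)))| ≤
      ∫ σ in Set.Icc (0:ℝ) (2*π), (R * T * h ^ 2) *
        (Real.sin s / (Real.sin σ ^ 2 + Real.sin s ^ 2)) := by
    rw [← Real.norm_eq_abs]
    refine norm_integral_le_of_norm_le (iS.const_mul _) ?_
    refine (ae_restrict_iff' measurableSet_Icc).2 (Eventually.of_forall fun σ hσ => ?_)
    have hSp : 0 < Real.sin σ ^ 2 + Real.sin s ^ 2 := by positivity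
    by_cases hne : Real.cos σ = Real.cos s
    · rw [hne]
      simp only [sub_self, div_zero, mul_zero, norm_zero]
      positivity
    obtain ⟨f1, f2, f3⟩ := kf' σ hσ hne
    obtain ⟨g1, g2, g3⟩ := kg' σ hσ hne
    have hfp := hmf.trans_le f1
    have hgp := hmg.trans_le g1
    have hxp : 0 < |Real.cos s - Real.cos σ| := abs_pos.2 (sub_ne_zero.2 (Ne.symm hne))
    have r1 : qf g s σ / qf f s σ ≤ R := div_le_div₀ hMg.le g2 hmf f1
    have r2 : dg / df ≤ R := div_le_div₀ hMg.le dg2 hmf df1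
    have E := L_lip (X := h * R) (x := h * (qf g s σ / qf f s σ)) (y := h * (dg / df))
      (by positivity) (by positivity) (by gcongr) (by gcongr)
    have t1 : Real.log (1 + h * (qf g s σ / qf f s σ))
        = Real.log (qf f s σ + h * qf g s σ) - Real.log (qf f s σ) := by
      rw [← Real.log_div (by positivity) (by positivity)]
      congr 1; field_simp
    have t2 : Real.log (1 + h * (dg / df)) = Real.log (df + h * dg) - Real.log df := by
      rw [← Real.log_div (by positivity) (by positivity)]
      congr 1; field_simp
    rw [t1, t2, ← mul_sub, abs_mul, abs_of_pos hp] at E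
    have rb := ratio_bound hmf f1 df1 habsg habsf (a := qf g s σ)
    have rb2 : |qf g s σ / qf f s σ - dg / df| * (Real.sin σ ^ 2 + Real.sin s ^ 2)
        ≤ T * |Real.cos s - Real.cos σ| := by
      calc _ ≤ (Mf * |qf g s σ - dg| + Mg * |qf f s σ - df|) / mf ^ 2
            * (Real.sin σ ^ 2 + Real.sin s ^ 2) := by gcongr
        _ = (Mf * (|qf g s σ - dg| * (Real.sin σ ^ 2 + Real.sin s ^ 2))
            + Mg * (|qf f s σ - df| * (Real.sin σ ^ 2 + Real.sin s ^ 2))) / mf ^ 2 := by ring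
        _ ≤ (Mf * (Cg * |Real.cos s - Real.cos σ|)
            + Mg * (Cf * |Real.cos s - Real.cos σ|)) / mf ^ 2 := by gcongr
        _ = _ := by rw [hT]; ring
    rw [← sub_div, mul_div_assoc' h (qf g s σ / qf f s σ - dg / df), ← sub_div, Real.norm_eq_abs, abs_mul, abs_of_pos hss, abs_div]
    have hE2 : |Real.log (qf f s σ + h * qf g s σ) - Real.log (df + h * dg)
        - (Real.log (qf f s σ) - Real.log df) - h * (qf g s σ / qf f s σ - dg / df)|
        ≤ h * R * (h * |qf g s σ / qf f s σ - dg / df|) := by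
      refine le_trans (le_of_eq ?_) E
      congr 1; ring
    have hfinal : |Real.log (qf f s σ + h * qf g s σ) - Real.log (df + h * dg)
        - (Real.log (qf f s σ) - Real.log df) - h * (qf g s σ / qf f s σ - dg / df)|
          / |Real.cos s - Real.cos σ| ≤ R * T * h ^ 2 / (Real.sin σ ^ 2 + Real.sin s ^ 2) := by
      rw [div_le_div_iff₀ hxp hSp]
      calc _ ≤ h * R * (h * |qf g s σ / qf f s σ - dg / df|)
            * (Real.sin σ ^ 2 + Real.sin s ^ 2) := by gcongr
        _ = h ^ 2 * R * (|qf g s σ / qf f s σ - dg / df|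
            * (Real.sin σ ^ 2 + Real.sin s ^ 2)) := by ring
        _ ≤ h ^ 2 * R * (T * |Real.cos s - Real.cos σ|) := by gcongr
        _ = _ := by ring
    calc _ ≤ Real.sin s * (R * T * h ^ 2 / (Real.sin σ ^ 2 + Real.sin s ^ 2)) := by gcongr
      _ = _ := by ring
  have e5 : ∫ σ in Set.Icc (0:ℝ) (2*π), (R * T * h ^ 2) *
        (Real.sin s / (Real.sin σ ^ 2 + Real.sin s ^ 2)) = (R * T * h ^ 2) *
      ∫ σ in Set.Icc (0:ℝ) (2*π), Real.sin s / (Real.sin σ ^ 2 + Real.sin s ^ 2) :=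
    integral_const_mul _ _
  rw [e5] at hfin
  have hfin2 := hfin.trans (mul_le_mul_of_nonneg_left bS (by positivity : 0 ≤ R * T * h ^ 2))
  calc _ ≤ 1 / (2*π) * (R * T * h ^ 2 * (3 * π ^ 2)) :=
        mul_le_mul_of_nonneg_left hfin2 (by positivity)
    _ = _ := by ring
end

section
/- Let f and g be symmetric simple-loop symbols of class SL^α with α ≥ 2 and let β > 0 be a constant (so that f + β·g is again a symmetric simple-loop symbol). Then there exists a constant κ > 0, depending only on f, g and β, such that for every n and every j = 1, …, n: |λ_j(T_n(f + β·g)) − f(d_{j,n}) − β·g(d_{j,n})| ≤ κ·h. -/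
open MeasureTheory Filter Real Topology

lemma aux_deriv_lower (v : ℝ → ℝ) (hv : Continuous v) (d0 dpi : ℝ)
    (h0 : HasDerivAt v d0 0) (hd0 : 0 < d0) (hpi : HasDerivAt v dpi π) (hdpi : dpi < 0)
    (v0 : v 0 = 0) (vpi : v π = 0) (hpos : ∀ σ ∈ Set.Ioo (0:ℝ) π, 0 < v σ) :
    ∃ δ > (0:ℝ), ∀ θ ∈ Set.Icc (0:ℝ) π, δ * Real.sin θ ≤ v θ := by
  have key : ∃ δ > (0:ℝ), ∀ θ ∈ Set.Icc (0:ℝ) π, θ ∈ Set.Icc (0:ℝ) π → δ * Real.sin θ ≤ v θ := by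
    refine (isCompact_Icc (a := (0:ℝ)) (b := π)).induction_on
      (p := fun s => ∃ δ > (0:ℝ), ∀ θ ∈ s, θ ∈ Set.Icc (0:ℝ) π → δ * Real.sin θ ≤ v θ)
      ⟨1, one_pos, by simp⟩ ?_ ?_ ?_
    · rintro s t hst ⟨δ, h, h'⟩
      exact ⟨δ, h, fun θ hθ => h' θ (hst hθ)⟩
    · rintro s t ⟨δ, h, h'⟩ ⟨δ', g, g'⟩
      refine ⟨min δ δ', lt_min h g, ?_⟩
      rintro θ (hθ | hθ) hI
      · exact (mul_le_mul_of_nonneg_right (min_le_left _ _)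
          (Real.sin_nonneg_of_mem_Icc hI)).trans (h' θ hθ hI)
      · exact (mul_le_mul_of_nonneg_right (min_le_right _ _)
          (Real.sin_nonneg_of_mem_Icc hI)).trans (g' θ hθ hI)
    · intro x hx
      rcases eq_or_lt_of_le hx.1 with hx0 | hx0
      · subst hx0
        have := (hasDerivAt_iff_isLittleO.1 h0).def (c := d0/2) (by positivity)
        refine ⟨_, mem_nhdsWithin_of_mem_nhds this, d0/2, by positivity, ?_⟩
        intro θ hθ hI
        simp only [Set.mem_ofPred_eq, v0, sub_zero, smul_eq_mul, Real.norm_eq_abs] at hθ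
        rw [abs_of_nonneg hI.1] at hθ
        have h1 := (abs_le.1 hθ).1
        have h2 := Real.sin_le hI.1
        nlinarith
      rcases eq_or_lt_of_le hx.2 with hx1 | hx1
      · subst hx1
        have := (hasDerivAt_iff_isLittleO.1 hpi).def (c := -dpi/2) (by linarith)
        refine ⟨_, mem_nhdsWithin_of_mem_nhds this, -dpi/2, by linarith, ?_⟩
        intro θ hθ hI
        simp only [Set.mem_ofPred_eq, vpi, sub_zero, smul_eq_mul, Real.norm_eq_abs] at hθ
        rw [abs_of_nonpos (show θ - π ≤ 0 by linarith [hI.2])] at hθ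
        have h1 := (abs_le.1 hθ).1
        have h2 := Real.sin_le (show 0 ≤ π - θ by linarith [hI.2])
        rw [Real.sin_pi_sub] at h2
        nlinarith
      · have hp := hpos x ⟨hx0, hx1⟩
        have : ∀ᶠ y in 𝓝 x, v x / 2 < v y := hv.continuousAt.eventually_const_lt (by linarith)
        refine ⟨_, mem_nhdsWithin_of_mem_nhds this, v x / 2, by positivity, ?_⟩
        intro θ hθ hI
        have h1 : v x / 2 < v θ := hθ
        have := Real.sin_le_one θ
        nlinarith
  obtain ⟨δ, h, h'⟩ := key
  exact ⟨δ, h, fun θ hθ => h' θ hθ hθ⟩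

/-- logarithmic slope comparison -/
lemma aux_log (v v' : ℝ → ℝ) (k : ℝ)
    (hv : ∀ θ ∈ Set.Ioo (0:ℝ) π, HasDerivAt v (v' θ) θ)
    (hpos : ∀ σ ∈ Set.Ioo (0:ℝ) π, 0 < v σ)
    (hk : ∀ θ ∈ Set.Ioo (0:ℝ) π, |Real.sin θ * v' θ - Real.cos θ * v θ| ≤ 2 * k * v θ)
    (ε : ℝ) (hε : |ε| = 1) :
    AntitoneOn (fun θ => ε * (Real.log (v θ) - Real.log (Real.sin θ))
      - k * (Real.log (1 - Real.cos θ) - Real.log (1 + Real.cos θ))) (Set.Ioo (0:ℝ) π) := by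
  have hder : ∀ θ ∈ Set.Ioo (0:ℝ) π, HasDerivAt (fun θ => ε * (Real.log (v θ) - Real.log (Real.sin θ))
      - k * (Real.log (1 - Real.cos θ) - Real.log (1 + Real.cos θ)))
      (ε * (v' θ / v θ - Real.cos θ / Real.sin θ) - k * (2 / Real.sin θ)) θ := by
    intro θ hθ
    have hs := Real.sin_pos_of_mem_Ioo hθ
    have hc1 : 0 < 1 - Real.cos θ := by nlinarith [Real.sin_sq_add_cos_sq θ, Real.cos_le_one θ]
    have hc2 : 0 < 1 + Real.cos θ := by nlinarith [Real.sin_sq_add_cos_sq θ, Real.neg_one_le_cos θ]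
    have h1 := (hv θ hθ).log (hpos θ hθ).ne'
    have h2 := (Real.hasDerivAt_sin θ).log hs.ne'
    have h3 := ((Real.hasDerivAt_cos θ).const_sub 1).log hc1.ne'
    have h4 := ((Real.hasDerivAt_cos θ).const_add 1).log hc2.ne'
    refine (((h1.sub h2).const_mul ε).sub ((h3.sub h4).const_mul k)).congr_deriv ?_
    congr 2
    rw [div_sub_div _ _ hc1.ne' hc2.ne', div_eq_div_iff (by positivity) hs.ne']
    linear_combination (2 * (Real.sin_sq_add_cos_sq θ))
  refine antitoneOn_of_deriv_nonpos (convex_Ioo _ _)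
    (fun θ hθ => (hder θ hθ).continuousAt.continuousWithinAt) ?_ ?_
  · rw [interior_Ioo]
    exact fun θ hθ => (hder θ hθ).differentiableAt.differentiableWithinAt
  · rw [interior_Ioo]
    intro θ hθ
    rw [(hder θ hθ).deriv]
    have hs := Real.sin_pos_of_mem_Ioo hθ
    have hp := hpos θ hθ
    have : ε * (Real.sin θ * v' θ - Real.cos θ * v θ) ≤ 2 * k * v θ := by
      refine (le_abs_self _).trans ?_
      rw [abs_mul, hε, one_mul]; exact hk θ hθ
    have e : ε * (v' θ / v θ - Real.cos θ / Real.sin θ) - k * (2 / Real.sin θ)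
      = (ε * (Real.sin θ * v' θ - Real.cos θ * v θ) - 2 * k * v θ) / (v θ * Real.sin θ) := by
      field_simp
    rw [e]
    exact div_nonpos_of_nonpos_of_nonneg (by linarith) (by positivity)

lemma aux_exp (θ : ℝ) (hθ : θ ∈ Set.Ioo (0:ℝ) π) (k : ℕ) :
    Real.exp (k * (Real.log (1 - Real.cos θ) - Real.log (1 + Real.cos θ))) * (1 + Real.cos θ)^k
      = (1 - Real.cos θ)^k ∧
    Real.exp (-(k * (Real.log (1 - Real.cos θ) - Real.log (1 + Real.cos θ)))) * (1 - Real.cos θ)^k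
      = (1 + Real.cos θ)^k := by
  have hs := Real.sin_pos_of_mem_Ioo hθ
  have hc1 : 0 < 1 - Real.cos θ := by nlinarith [Real.sin_sq_add_cos_sq θ, Real.cos_le_one θ]
  have hc2 : 0 < 1 + Real.cos θ := by nlinarith [Real.sin_sq_add_cos_sq θ, Real.neg_one_le_cos θ]
  rw [Real.exp_neg, Real.exp_nat_mul, Real.exp_sub, Real.exp_log hc1, Real.exp_log hc2]
  constructor
  · rw [← mul_pow]; congr 1; field_simp
  · rw [← inv_pow, ← mul_pow]; congr 1; field_simp

/-- key pointwise inequality on the open interval -/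
lemma aux_pointwise (u v v' : ℝ → ℝ) (k : ℕ)
    (hu : ∀ θ, HasDerivAt u (v θ) θ)
    (hv : ∀ θ ∈ Set.Ioo (0:ℝ) π, HasDerivAt v (v' θ) θ)
    (hpos : ∀ σ ∈ Set.Ioo (0:ℝ) π, 0 < v σ)
    (hk : ∀ θ ∈ Set.Ioo (0:ℝ) π, |Real.sin θ * v' θ - Real.cos θ * v θ| ≤ 2 * k * v θ)
    (ε : ℝ) (hε : ε = 1 ∨ ε = -1) (s : ℝ) (hs : s ∈ Set.Ioo (0:ℝ) π) :
    ∃ C > (0:ℝ), ∀ θ ∈ Set.Ioo (0:ℝ) π,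
      ε * (u θ - u s) * (1 + ε * Real.cos θ)^k ≤
        C * (ε * (Real.cos s - Real.cos θ)) * (1 - ε * Real.cos θ)^k := by
  set τ : ℝ → ℝ := fun θ => Real.log (1 - Real.cos θ) - Real.log (1 + Real.cos θ) with hτ
  set L : ℝ → ℝ := fun θ => Real.log (v θ) - Real.log (Real.sin θ) with hL
  have anti : ∀ e : ℝ, |e| = 1 → AntitoneOn (fun θ => e * L θ - k * τ θ) (Set.Ioo (0:ℝ) π) :=
    fun e he => aux_log v v' k hv hpos hk e he
  have a1 := anti 1 (by simp)
  have a2 := anti (-1) (by simp)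
  have τmono : ∀ a ∈ Set.Ioo (0:ℝ) π, ∀ b ∈ Set.Ioo (0:ℝ) π, a ≤ b → (k:ℝ) * τ a ≤ k * τ b := by
    intro a ha b hb hab
    have h1 := a1 ha hb hab
    have h2 := a2 ha hb hab
    simp only at h1 h2
    linarith
  have mvt : ∀ a ∈ Set.Ioo (0:ℝ) π, ∀ b ∈ Set.Ioo (0:ℝ) π, a < b → ∃ ξ ∈ Set.Ioo a b,
      u b - u a = (Real.cos a - Real.cos b) * Real.exp (L ξ) := by
    intro a ha b hb hab
    obtain ⟨ξ, hξ, h⟩ := exists_ratio_hasDerivAt_eq_ratio_slope u v hab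
      (fun x _ => (hu x).continuousAt.continuousWithinAt) (fun x _ => hu x)
      (fun x => - Real.cos x) (fun x => Real.sin x)
      (by fun_prop) (fun x _ => (Real.hasDerivAt_cos x).neg.congr_deriv (neg_neg _))
    have hξ' : ξ ∈ Set.Ioo (0:ℝ) π := ⟨ha.1.trans hξ.1, hξ.2.trans hb.2⟩
    have hsin := Real.sin_pos_of_mem_Ioo hξ'
    refine ⟨ξ, hξ, ?_⟩
    rw [hL]
    simp only
    rw [Real.exp_sub, Real.exp_log (hpos ξ hξ'), Real.exp_log hsin]
    field_simp
    linarith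
  have cosm : ∀ a ∈ Set.Ioo (0:ℝ) π, ∀ b ∈ Set.Ioo (0:ℝ) π, a ≤ b → Real.cos b ≤ Real.cos a :=
    fun a ha b hb hab => Real.cos_le_cos_of_nonneg_of_le_pi ha.1.le hb.2.le hab
  have npow : ∀ θ, 0 ≤ (1 + Real.cos θ)^k ∧ 0 ≤ (1 - Real.cos θ)^k := fun θ =>
    ⟨pow_nonneg (by linarith [Real.neg_one_le_cos θ]) _, pow_nonneg (by linarith [Real.cos_le_one θ]) _⟩
  rcases hε with rfl | rfl
  · refine ⟨Real.exp (L s - k * τ s), Real.exp_pos _, fun θ hθ => ?_⟩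
    have key : u θ - u s ≤ (Real.cos s - Real.cos θ) * (Real.exp (L s - k * τ s) * Real.exp (k * τ θ)) := by
      rw [← Real.exp_add]
      rcases lt_trichotomy s θ with h | h | h
      · obtain ⟨ξ, hξ, e⟩ := mvt s hs θ hθ h
        have hξ' : ξ ∈ Set.Ioo (0:ℝ) π := ⟨hs.1.trans hξ.1, hξ.2.trans hθ.2⟩
        rw [e]
        have h1 := a1 hs hξ' hξ.1.le
        have h2 := τmono ξ hξ' θ hθ hξ.2.le
        simp only at h1
        exact mul_le_mul_of_nonneg_left (Real.exp_le_exp.2 (by linarith))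
          (by linarith [cosm s hs θ hθ h.le])
      · subst h; simp
      · obtain ⟨ξ, hξ, e⟩ := mvt θ hθ s hs h
        have hξ' : ξ ∈ Set.Ioo (0:ℝ) π := ⟨hθ.1.trans hξ.1, hξ.2.trans hs.2⟩
        have h1 := a1 hξ' hs hξ.2.le
        have h2 := τmono θ hθ ξ hξ' hξ.1.le
        simp only at h1
        have : (Real.cos θ - Real.cos s) * Real.exp (L s - k * τ s + k * τ θ) ≤ 
          (Real.cos θ - Real.cos s) * Real.exp (L ξ) := 
          mul_le_mul_of_nonneg_left (Real.exp_le_exp.2 (by linarith))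
          (by linarith [cosm θ hθ s hs h.le])
        linarith
    have := mul_le_mul_of_nonneg_right key (npow θ).1
    have e := (aux_exp θ hθ k).1
    simp only [one_mul]
    rw [← e]
    calc _ ≤ _ := this
      _ = _ := by ring
  · refine ⟨Real.exp (L s + k * τ s), Real.exp_pos _, fun θ hθ => ?_⟩
    have key : u s - u θ ≤ (Real.cos θ - Real.cos s) * (Real.exp (L s + k * τ s) * Real.exp (-(k * τ θ))) := by
      rw [← Real.exp_add]
      rcases lt_trichotomy s θ with h | h | h
      · obtain ⟨ξ, hξ, e⟩ := mvt s hs θ hθ h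
        have hξ' : ξ ∈ Set.Ioo (0:ℝ) π := ⟨hs.1.trans hξ.1, hξ.2.trans hθ.2⟩
        have h1 := a2 hs hξ' hξ.1.le
        have h2 := τmono ξ hξ' θ hθ hξ.2.le
        simp only at h1
        have : (Real.cos s - Real.cos θ) * Real.exp (L s + k * τ s + -(k * τ θ)) ≤ 
          (Real.cos s - Real.cos θ) * Real.exp (L ξ) := 
          mul_le_mul_of_nonneg_left (Real.exp_le_exp.2 (by linarith))
          (by linarith [cosm s hs θ hθ h.le])
        linarith
      · subst h; simp
      · obtain ⟨ξ, hξ, e⟩ := mvt θ hθ s hs h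
        have hξ' : ξ ∈ Set.Ioo (0:ℝ) π := ⟨hθ.1.trans hξ.1, hξ.2.trans hs.2⟩
        rw [e]
        have h1 := a2 hξ' hs hξ.2.le
        have h2 := τmono θ hθ ξ hξ' hξ.1.le
        simp only at h1
        exact mul_le_mul_of_nonneg_left (Real.exp_le_exp.2 (by linarith))
          (by linarith [cosm θ hθ s hs h.le])
    have := mul_le_mul_of_nonneg_right key (npow θ).2
    have e := (aux_exp θ hθ k).2
    have e1 : (1 - (-1) * Real.cos θ) = 1 + Real.cos θ := by ring
    have e2 : (1 + (-1) * Real.cos θ) = 1 - Real.cos θ := by ring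
    rw [e1, e2, ← e]
    calc _ = (u s - u θ) * (1 - Real.cos θ)^k := by ring
      _ ≤ _ := this
      _ = _ := by ring

/-- Extension to `[0, 2π]`. -/
lemma aux_pointwise' (u v v' : ℝ → ℝ) (k : ℕ)
    (hu : ∀ θ, HasDerivAt u (v θ) θ)
    (hsymm : ∀ s, u (2*π - s) = u s)
    (hv : ∀ θ ∈ Set.Ioo (0:ℝ) π, HasDerivAt v (v' θ) θ)
    (hpos : ∀ σ ∈ Set.Ioo (0:ℝ) π, 0 < v σ)
    (hk : ∀ θ ∈ Set.Ioo (0:ℝ) π, |Real.sin θ * v' θ - Real.cos θ * v θ| ≤ 2 * k * v θ)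
    (ε : ℝ) (hε : ε = 1 ∨ ε = -1) (s : ℝ) (hs : s ∈ Set.Ioo (0:ℝ) π) :
    ∃ C > (0:ℝ), ∀ θ ∈ Set.Icc (0:ℝ) (2*π),
      ε * (u θ - u s) * (1 + ε * Real.cos θ)^k ≤
        C * (ε * (Real.cos s - Real.cos θ)) * (1 - ε * Real.cos θ)^k := by
  obtain ⟨C, hC, h⟩ := aux_pointwise u v v' k hu hv hpos hk ε hε s hs
  have huc : Continuous u := continuous_iff_continuousAt.2 fun x => (hu x).continuousAt
  have h2 : ∀ θ ∈ Set.Icc (0:ℝ) π, ε * (u θ - u s) * (1 + ε * Real.cos θ)^k ≤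
        C * (ε * (Real.cos s - Real.cos θ)) * (1 - ε * Real.cos θ)^k := by
    have hcl : IsClosed {θ : ℝ | ε * (u θ - u s) * (1 + ε * Real.cos θ)^k ≤
        C * (ε * (Real.cos s - Real.cos θ)) * (1 - ε * Real.cos θ)^k} :=
      isClosed_le (by fun_prop) (by fun_prop)
    have := hcl.closure_subset_iff.2 (show Set.Ioo (0:ℝ) π ⊆ _ from h)
    rw [closure_Ioo Real.pi_pos.ne] at this
    exact this
  refine ⟨C, hC, fun θ hθ => ?_⟩
  rcases le_total θ π with h' | h'
  · exact h2 θ ⟨hθ.1, h'⟩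
  · have := h2 (2*π - θ) ⟨by linarith [hθ.2], by linarith⟩
    rwa [hsymm, Real.cos_two_pi_sub] at this

open Polynomial in
/-- The quadratic form of the multiplication by `w`, on polynomials. -/
noncomputable def Qf (w : ℝ → ℝ) (p : ℂ[X]) : ℝ :=
  ∫ θ in (0:ℝ)..(2*π), w θ * ‖p.eval (Complex.exp (Complex.I * θ))‖^2

open Polynomial in
lemma toeplitz_form (u : ℝ → ℝ) (hu : Continuous u) (n : ℕ) (p : ℂ[X]) (hp : p ∈ degreeLT ℂ n)
    (a : Fin n → ℂ) (ha : a = degreeLTEquiv ℂ n ⟨p, hp⟩) :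
    star a ⬝ᵥ (toeplitz u n).mulVec a = ((1/(2*π) * Qf u p : ℝ) : ℂ) := by
  have hev : ∀ θ : ℝ, p.eval (Complex.exp (Complex.I * θ)) =
      ∑ i : Fin n, a i * Complex.exp (Complex.I * θ) ^ (i:ℕ) := by
    intro θ; rw [ha]; exact eval_eq_sum_degreeLTEquiv hp _
  have hconj : ∀ θ : ℝ, (starRingEnd ℂ) (Complex.exp (Complex.I * θ)) =
      Complex.exp (-Complex.I * θ) := by
    intro θ; rw [← Complex.exp_conj]; simp
  have hintegrand : ∀ θ : ℝ, ((u θ * ‖p.eval (Complex.exp (Complex.I * θ))‖^2 : ℝ) : ℂ) =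
      ∑ i : Fin n, ∑ j : Fin n, (starRingEnd ℂ (a i)) * a j *
        ((u θ : ℂ) * Complex.exp (-Complex.I * (((i:ℤ) - (j:ℤ) : ℤ) : ℂ) * (θ:ℂ))) := by
    intro θ
    push_cast
    rw [← Complex.conj_mul', hev, map_sum, Finset.sum_mul_sum, Finset.mul_sum]
    refine Finset.sum_congr rfl fun i _ => ?_
    rw [Finset.mul_sum]
    refine Finset.sum_congr rfl fun j _ => ?_
    have : Complex.exp (-Complex.I * ((i:ℂ) - (j:ℂ)) * (θ:ℂ)) =
        Complex.exp (-Complex.I * θ) ^ (i:ℕ) * Complex.exp (Complex.I * θ) ^ (j:ℕ) := by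
      rw [← Complex.exp_nat_mul, ← Complex.exp_nat_mul, ← Complex.exp_add]
      congr 1; ring
    rw [this, map_mul, map_pow, hconj]
    ring
  have hQ : ((Qf u p : ℝ) : ℂ) = ∑ i : Fin n, ∑ j : Fin n, (starRingEnd ℂ (a i)) * a j *
      ∫ θ in (0:ℝ)..(2*π), ((u θ : ℂ) * Complex.exp (-Complex.I * (((i:ℤ) - (j:ℤ) : ℤ) : ℂ) * (θ:ℂ))) := by
    rw [Qf, ← intervalIntegral.integral_ofReal]
    simp_rw [hintegrand]
    rw [intervalIntegral.integral_finsetSum]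
    · refine Finset.sum_congr rfl fun i _ => ?_
      rw [intervalIntegral.integral_finsetSum]
      · refine Finset.sum_congr rfl fun j _ => ?_
        rw [intervalIntegral.integral_const_mul]
      · intro j _
        exact Continuous.intervalIntegrable (by fun_prop) _ _
    · intro i _
      exact Continuous.intervalIntegrable (by fun_prop) _ _
  rw [Complex.ofReal_mul, hQ]
  simp only [dotProduct, Matrix.mulVec, toeplitz, Matrix.of_apply, fCoeff, Finset.mul_sum,
    Pi.star_apply, RCLike.star_def]
  refine Finset.sum_congr rfl fun i _ => Finset.sum_congr rfl fun j _ => ?_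
  push_cast
  ring

lemma integral_exp_int (k : ℤ) :
    ∫ θ in (0:ℝ)..(2*π), Complex.exp (-Complex.I * (k : ℂ) * (θ : ℂ)) =
      if k = 0 then (2 * π : ℂ) else 0 := by
  split_ifs with h
  · subst h; simp
  · have hk : (-Complex.I * (k:ℂ)) ≠ 0 := by
      simp [h, Complex.I_ne_zero]
    rw [integral_exp_mul_complex hk]
    have : Complex.exp (-Complex.I * (k:ℂ) * ((2*π : ℝ):ℂ)) = 1 := by
      rw [Complex.exp_eq_one_iff]
      exact ⟨-k, by push_cast; ring⟩
    rw [this]; simp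

lemma fCoeff_affine (u : ℝ → ℝ) (hu : Continuous u) (ε c : ℝ) (k : ℤ) :
    fCoeff (fun θ => ε * (u θ - c)) k = ε * (fCoeff u k - if k = 0 then (c:ℂ) else 0) := by
  have h1 : ∫ θ in (0:ℝ)..(2*π), ((ε * (u θ - c) : ℝ) : ℂ) * Complex.exp (-Complex.I * (k : ℂ) * (θ : ℂ))
      = ε * ((∫ θ in (0:ℝ)..(2*π), (u θ : ℂ) * Complex.exp (-Complex.I * (k : ℂ) * (θ : ℂ))) -
        c * ∫ θ in (0:ℝ)..(2*π), Complex.exp (-Complex.I * (k : ℂ) * (θ : ℂ))) := by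
    rw [← intervalIntegral.integral_const_mul, ← intervalIntegral.integral_sub,
      ← intervalIntegral.integral_const_mul]
    · congr 1; ext θ; push_cast; ring
    · exact Continuous.intervalIntegrable (by fun_prop) _ _
    · exact Continuous.intervalIntegrable (by fun_prop) _ _
  have hpi : (π : ℂ) ≠ 0 := by exact_mod_cast Real.pi_ne_zero
  rw [fCoeff, h1, integral_exp_int, fCoeff]
  split_ifs
  · field_simp
  · ring

lemma toeplitz_affine (u : ℝ → ℝ) (hu : Continuous u) (ε c : ℝ) (n : ℕ) :
    toeplitz (fun θ => ε * (u θ - c)) n = (ε:ℂ) • (toeplitz u n - (c:ℂ) • 1) := by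
  ext i j
  simp only [toeplitz, Matrix.of_apply, fCoeff_affine u hu, Matrix.smul_apply, Matrix.sub_apply,
    Matrix.one_apply, smul_eq_mul]
  have : ((i:ℤ) - (j:ℤ) = 0) ↔ i = j := by rw [sub_eq_zero, Fin.ext_iff]; norm_cast
  simp [this]

lemma fCoeff_cos (k : ℤ) : fCoeff Real.cos k =
    (if k = 1 then (1/2:ℂ) else 0) + (if k = -1 then (1/2:ℂ) else 0) := by
  have h1 : ∫ θ in (0:ℝ)..(2*π), ((Real.cos θ : ℝ) : ℂ) * Complex.exp (-Complex.I * (k : ℂ) * (θ : ℂ))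
      = (1/2) * ((∫ θ in (0:ℝ)..(2*π), Complex.exp (-Complex.I * ((k-1 : ℤ) : ℂ) * (θ : ℂ))) +
        ∫ θ in (0:ℝ)..(2*π), Complex.exp (-Complex.I * ((k+1:ℤ) : ℂ) * (θ : ℂ))) := by
    rw [← intervalIntegral.integral_add, ← intervalIntegral.integral_const_mul]
    · congr 1; ext θ
      rw [Complex.ofReal_cos, Complex.cos]
      have e1 : Complex.exp (-Complex.I * ((k-1 : ℤ) : ℂ) * (θ : ℂ)) =
        Complex.exp (θ * Complex.I) * Complex.exp (-Complex.I * (k : ℂ) * (θ : ℂ)) := by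
        rw [← Complex.exp_add]; congr 1; push_cast; ring
      have e2 : Complex.exp (-Complex.I * ((k+1 : ℤ) : ℂ) * (θ : ℂ)) =
        Complex.exp (-θ * Complex.I) * Complex.exp (-Complex.I * (k : ℂ) * (θ : ℂ)) := by
        rw [← Complex.exp_add]; congr 1; push_cast; ring
      rw [e1, e2]; ring
    · exact Continuous.intervalIntegrable (by fun_prop) _ _
    · exact Continuous.intervalIntegrable (by fun_prop) _ _
  have hpi : (π : ℂ) ≠ 0 := by exact_mod_cast Real.pi_ne_zero
  rw [fCoeff, h1, integral_exp_int, integral_exp_int]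
  have : (k - 1 = 0) ↔ k = 1 := by omega
  have h' : (k + 1 = 0) ↔ k = -1 := by omega
  simp only [this, h']
  split_ifs <;> field_simp <;> ring

/-- sine vectors -/
noncomputable def sineVec (n : ℕ) (i : Fin n) : Fin n → ℂ :=
  fun m => ((Real.sin (((m:ℕ)+1) * (((i:ℕ)+1) * π * (1/(n+1:ℝ)))) : ℝ) : ℂ)

lemma toeplitz_cos_sine (n : ℕ) (i : Fin n) :
    (toeplitz Real.cos n).mulVec (sineVec n i) =
      ((Real.cos (((i:ℕ)+1) * π * (1/(n+1:ℝ))) : ℝ) : ℂ) • sineVec n i := by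
  ext l
  set d : ℝ := ((i:ℕ)+1) * π * (1/(n+1:ℝ)) with hd
  have hend : Real.sin ((n+1) * d) = 0 := by
    have : (n+1:ℝ) * d = ((i+1 : ℕ) : ℝ) * π := by
      rw [hd]; push_cast; field_simp
    rw [this]; exact Real.sin_nat_mul_pi _
  set F : ℕ → ℂ := fun m => ((Real.sin ((m:ℝ) * d) : ℝ) : ℂ) with hF
  have hsum : (toeplitz Real.cos n).mulVec (sineVec n i) l =
      ∑ m ∈ Finset.range n, ((if m + 1 = (l:ℕ) then F (m+1) / 2 else 0) +
        (if m = (l:ℕ) + 1 then F (m+1) / 2 else 0)) := by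
    rw [← Fin.sum_univ_eq_sum_range (fun m => ((if m + 1 = (l:ℕ) then F (m+1) / 2 else 0) +
        (if m = (l:ℕ) + 1 then F (m+1) / 2 else 0)))]
    simp only [Matrix.mulVec, dotProduct, toeplitz, Matrix.of_apply, fCoeff_cos]
    refine Finset.sum_congr rfl fun m _ => ?_
    have e1 : ((l:ℤ) - (m:ℤ) = 1) ↔ (m:ℕ) + 1 = (l:ℕ) := by omega
    have e2 : ((l:ℤ) - (m:ℤ) = -1) ↔ (m:ℕ) = (l:ℕ) + 1 := by omega
    have e3 : sineVec n i m = F (m+1) := by simp [sineVec, hF, hd]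
    simp only [e1, e2, e3]
    split_ifs <;> ring
  rw [hsum, Finset.sum_add_distrib]
  have s2 : ∑ m ∈ Finset.range n, (if m = (l:ℕ) + 1 then F (m+1) / 2 else 0) = F (l+2) / 2 := by
    rw [Finset.sum_ite_eq']
    split_ifs with h
    · rfl
    · have : (l:ℕ) + 1 = n := by have := l.2; simp at h; omega
      have : F (l+2) = 0 := by
        simp only [hF]
        have e : (((l:ℕ)+2 : ℕ) : ℝ) = n + 1 := by
          have : (l:ℕ) + 2 = n + 1 := by omega
          exact_mod_cast this
        rw [e, hend]; simp
      rw [this]; simp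
  have s1 : ∑ m ∈ Finset.range n, (if m + 1 = (l:ℕ) then F (m+1) / 2 else 0) = F l / 2 := by
    have hl := l.2
    rcases Nat.eq_zero_or_pos (l:ℕ) with h0 | h0
    · rw [h0]; simp [hF]
    · obtain ⟨q, hq⟩ := Nat.exists_eq_succ_of_ne_zero h0.ne'
      rw [hq]
      simp only [Nat.succ_eq_add_one, Nat.add_right_cancel_iff]
      rw [Finset.sum_ite_eq', if_pos (by simp; omega)]
  rw [s1, s2]
  simp only [Pi.smul_apply, smul_eq_mul, sineVec, hF, ← hd]
  rw [← Complex.ofReal_mul]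
  have : Real.sin (((l:ℕ):ℝ) * d) + Real.sin ((((l:ℕ)+2:ℕ):ℝ) * d)
      = 2 * (Real.cos d * Real.sin ((((l:ℕ):ℝ)+1) * d)) := by
    have a1 : ((l:ℕ):ℝ) * d = (((l:ℕ):ℝ)+1) * d - d := by ring
    have a2 : (((l:ℕ)+2:ℕ):ℝ) * d = (((l:ℕ):ℝ)+1) * d + d := by push_cast; ring
    rw [a1, a2, Real.sin_sub, Real.sin_add]; ring
  have h2 := congrArg (fun x : ℝ => (x:ℂ)) this
  push_cast at h2 ⊢
  linear_combination h2 / 2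

lemma sine_node (n : ℕ) (i : Fin n) :
    (((i:ℕ)+1) * π * (1/(n+1:ℝ))) ∈ Set.Ioo (0:ℝ) π := by
  have hi : ((i:ℕ):ℝ) + 1 < n + 1 := by have := i.2; exact_mod_cast Nat.succ_lt_succ this
  constructor
  · positivity
  · rw [mul_one_div, div_lt_iff₀ (by positivity), mul_comm]
    exact mul_lt_mul_of_pos_left hi Real.pi_pos

lemma sineVec_ne (n : ℕ) (i : Fin n) : sineVec n i ≠ 0 := by
  intro h
  have h0 : 0 < n := i.pos
  have := congrFun h ⟨0, h0⟩
  simp only [sineVec, Pi.zero_apply, Complex.ofReal_eq_zero] at this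
  have h2 := Real.sin_pos_of_mem_Ioo (sine_node n i)
  simp only [Nat.cast_zero, zero_add, one_mul] at this
  exact h2.ne' this

lemma sineVec_orth (n : ℕ) (i j : Fin n) (hij : i ≠ j) : star (sineVec n i) ⬝ᵥ sineVec n j = 0 := by
  have hstar : star (sineVec n i) = sineVec n i := by
    ext m; simp only [sineVec, Pi.star_apply, RCLike.star_def, Complex.conj_ofReal]
  have hsym : (toeplitz Real.cos n).transpose = toeplitz Real.cos n := by
    ext a b
    simp only [toeplitz, Matrix.transpose_apply, Matrix.of_apply, fCoeff_cos]
    have e1 : ((b:ℤ) - (a:ℤ) = 1) ↔ ((a:ℤ) - (b:ℤ) = -1) := by omega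
    have e2 : ((b:ℤ) - (a:ℤ) = -1) ↔ ((a:ℤ) - (b:ℤ) = 1) := by omega
    simp only [e1, e2]; ring
  have h1 : sineVec n i ⬝ᵥ (toeplitz Real.cos n).mulVec (sineVec n j) =
      (toeplitz Real.cos n).mulVec (sineVec n i) ⬝ᵥ sineVec n j := by
    rw [Matrix.dotProduct_mulVec, ← Matrix.mulVec_transpose, hsym]
  rw [toeplitz_cos_sine, toeplitz_cos_sine, dotProduct_smul, smul_dotProduct, smul_eq_mul,
    smul_eq_mul, ← sub_eq_zero, ← sub_mul] at h1
  rw [hstar]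
  refine (mul_eq_zero.1 h1).resolve_left ?_
  rw [sub_eq_zero]
  intro h
  have h := Complex.ofReal_injective h
  have := Real.injOn_cos (Set.Ioo_subset_Icc_self (sine_node n j))
    (Set.Ioo_subset_Icc_self (sine_node n i)) h
  have hp := Real.pi_pos
  apply hij
  have h3 : (((j:ℕ):ℝ)+1) = (((i:ℕ):ℝ)+1) := by
    field_simp at this
    linarith
  apply Fin.ext
  have : ((i:ℕ):ℝ) = j := by linarith
  exact_mod_cast this

open Polynomial ComplexOrder in
lemma span_form (w : ℝ → ℝ) (hw : Continuous w) (n : ℕ) (v : Fin n → Fin n → ℂ) (μ : Fin n → ℝ)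
    (hv : ∀ i, (toeplitz w n).mulVec (v i) = (μ i : ℂ) • v i)
    (orth : ∀ i j, i ≠ j → star (v i) ⬝ᵥ v j = 0) (hne : ∀ i, v i ≠ 0) (S : Finset (Fin n)) :
    ∃ W : Submodule ℂ ℂ[X], W ≤ degreeLT ℂ n ∧ Module.finrank ℂ W = S.card ∧
      ∀ p ∈ W, ∃ t : S → ℝ, (∀ i, 0 ≤ t i) ∧ (p ≠ 0 → ∃ i, 0 < t i) ∧
        Qf w p = ∑ i : S, μ i * t i := by
  have hnorm : ∀ i, ∃ r : ℝ, 0 < r ∧ star (v i) ⬝ᵥ v i = (r : ℂ) := by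
    intro i
    have h := (Matrix.dotProduct_star_self_pos_iff (v := v i)).2 (hne i)
    obtain ⟨h1, h2⟩ := Complex.pos_iff.1 h
    exact ⟨_, h1, Complex.ext rfl (by simpa using h2.symm)⟩
  choose r hr hr' using hnorm
  have hli : LinearIndependent ℂ (fun i : S => v i) := by
    rw [Fintype.linearIndependent_iff]
    intro c hc i
    have := congrArg (fun x => star (v i) ⬝ᵥ x) hc
    simp only [dotProduct_sum, dotProduct_smul, dotProduct_zero] at this
    rw [Finset.sum_eq_single i] at this
    · rw [hr', smul_eq_mul] at this
      exact (mul_eq_zero.1 this).resolve_right (by exact_mod_cast (hr i).ne')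
    · intro j _ hj
      rw [orth _ _ (fun h => hj (Subtype.ext h.symm)), smul_zero]
    · simp
  let E : (Fin n → ℂ) →ₗ[ℂ] ℂ[X] :=
    (degreeLT ℂ n).subtype ∘ₗ (degreeLTEquiv ℂ n).symm.toLinearMap
  have hE : Function.Injective E :=
    (Submodule.subtype_injective _).comp (degreeLTEquiv ℂ n).symm.injective
  refine ⟨(Submodule.span ℂ (Set.range fun i : S => v i)).map E, ?_, ?_, ?_⟩
  · rintro _ ⟨x, _, rfl⟩
    exact ((degreeLTEquiv ℂ n).symm x).2
  · rw [← (Submodule.equivMapOfInjective E hE _).finrank_eq, finrank_span_eq_card hli]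
    simp
  · rintro _ ⟨x, hx, rfl⟩
    obtain ⟨c, hc⟩ := (Submodule.mem_span_range_iff_exists_fun ℂ).1 hx
    refine ⟨fun i => 2 * π * (‖c i‖^2 * r i), fun i => ?_, fun hp => ?_, ?_⟩
    · have := (hr i).le
      positivity
    · by_contra! hcon
      apply hp
      have : ∀ i, c i = 0 := by
        intro i
        by_contra h
        have h1 := hcon i
        have h2 := hr i
        have h3 : 0 < ‖c i‖ := norm_pos_iff.2 h
        have : 0 < 2 * π * (‖c i‖^2 * r i) := by positivity
        linarith
      rw [← hc]; simp [this]
    · have h1 := toeplitz_form w hw n (E x) ((degreeLTEquiv ℂ n).symm x).2 x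
        ((degreeLTEquiv ℂ n).apply_symm_apply x).symm
      have h2 : star x ⬝ᵥ (toeplitz w n).mulVec x = ((∑ i : S, μ i * (‖c i‖^2 * r i) : ℝ) : ℂ) := by
        have hmv : (toeplitz w n).mulVec x = ∑ i : S, (c i * μ i) • v i := by
          rw [← hc, Matrix.mulVec_sum]
          refine Finset.sum_congr rfl fun i _ => ?_
          rw [Matrix.mulVec_smul, hv, smul_smul]
        rw [hmv, dotProduct_sum]
        push_cast
        refine Finset.sum_congr rfl fun i _ => ?_
        rw [dotProduct_smul, ← hc, star_sum, sum_dotProduct, Finset.sum_eq_single i]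
        · rw [star_smul, smul_dotProduct, hr', smul_eq_mul, smul_eq_mul, ← Complex.conj_mul']
          simp only [RCLike.star_def]
          ring
        · intro j _ hj
          rw [star_smul, smul_dotProduct, orth _ _ (fun h => hj (Subtype.ext h)), smul_zero]
        · simp
      rw [h2] at h1
      have h3 := Complex.ofReal_injective h1
      have hpi := Real.pi_pos
      have h4 : Qf w (E x) = 2 * π * ∑ i : S, μ i * (‖c i‖^2 * r i) := by
        rw [h3]; field_simp
      rw [h4, Finset.mul_sum]
      refine Finset.sum_congr rfl fun i _ => ?_
      ring

open Polynomial in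
lemma finDim_le (n : ℕ) (W : Submodule ℂ ℂ[X]) (hW : W ≤ degreeLT ℂ n) :
    FiniteDimensional ℂ W := by
  have : FiniteDimensional ℂ (degreeLT ℂ n) :=
    Module.Finite.equiv (degreeLTEquiv ℂ n).symm
  exact Submodule.finiteDimensional_of_le hW

open Polynomial in
lemma finrank_degreeLT' (n : ℕ) : Module.finrank ℂ (degreeLT ℂ n) = n := by
  rw [(degreeLTEquiv ℂ n).finrank_eq]; simp

open Polynomial in
lemma inf_dim (n : ℕ) (V W : Submodule ℂ ℂ[X]) (hV : V ≤ degreeLT ℂ n) (hW : W ≤ degreeLT ℂ n) :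
    Module.finrank ℂ V + Module.finrank ℂ W ≤ n + Module.finrank ℂ (V ⊓ W : Submodule ℂ ℂ[X]) := by
  have := finDim_le n V hV
  have := finDim_le n W hW
  have := finDim_le n _ le_rfl
  rw [← Submodule.finrank_sup_add_finrank_inf_eq]
  have h := Submodule.finrank_mono (sup_le hV hW)
  rw [finrank_degreeLT'] at h
  omega

open Polynomial in
lemma mul_space (n k : ℕ) (V : Submodule ℂ ℂ[X]) (hV : V ≤ degreeLT ℂ n) (q1 q2 : ℂ[X])
    (h1 : q1 ≠ 0) (h2 : q2 ≠ 0) (d1 : q1.natDegree ≤ k) (d2 : q2.natDegree ≤ k) :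
    ∃ Z : Submodule ℂ ℂ[X], Z ≤ degreeLT ℂ n ∧ Module.finrank ℂ V ≤ Module.finrank ℂ Z + k ∧
      ∀ z ∈ Z, ∃ y, z = q1 * y ∧ q2 * y ∈ V := by
  have hdeg : ∀ q : ℂ[X], q ≠ 0 → q.natDegree ≤ k → k ≤ n → ∀ y ∈ degreeLT ℂ (n - k),
      q * y ∈ degreeLT ℂ n := by
    intro q hq hqk hkn y hy
    rw [mem_degreeLT] at hy ⊢
    rcases eq_or_ne y 0 with rfl | hy0
    · simp
    rw [degree_eq_natDegree hy0, Nat.cast_lt] at hy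
    rw [degree_eq_natDegree (mul_ne_zero hq hy0), Nat.cast_lt, natDegree_mul hq hy0]
    omega
  have hinj : ∀ q : ℂ[X], q ≠ 0 → Function.Injective (LinearMap.mulLeft ℂ q) := by
    intro q hq a b hab
    exact mul_left_cancel₀ hq hab
  rcases lt_or_ge n k with hkn | hkn
  · refine ⟨⊥, bot_le, ?_, ?_⟩
    · have := finDim_le n _ le_rfl
      have h := Submodule.finrank_mono hV
      rw [finrank_degreeLT'] at h
      omega
    · intro z hz
      rw [Submodule.mem_bot] at hz
      exact ⟨0, by simp [hz]⟩
  · let D := degreeLT ℂ (n - k)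
    let Y := D ⊓ V.comap (LinearMap.mulLeft ℂ q2)
    refine ⟨Y.map (LinearMap.mulLeft ℂ q1), ?_, ?_, ?_⟩
    · rintro _ ⟨y, hy, rfl⟩
      exact hdeg q1 h1 d1 hkn y hy.1
    · have e1 : Module.finrank ℂ (Y.map (LinearMap.mulLeft ℂ q1)) = Module.finrank ℂ Y :=
        (Submodule.equivMapOfInjective _ (hinj q1 h1) Y).finrank_eq.symm
      have e2 : Module.finrank ℂ (Y.map (LinearMap.mulLeft ℂ q2)) = Module.finrank ℂ Y :=
        (Submodule.equivMapOfInjective _ (hinj q2 h2) Y).finrank_eq.symm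
      have e3 : Module.finrank ℂ (D.map (LinearMap.mulLeft ℂ q2)) = n - k := by
        rw [← (Submodule.equivMapOfInjective _ (hinj q2 h2) D).finrank_eq, finrank_degreeLT']
      have e4 : Y.map (LinearMap.mulLeft ℂ q2) = D.map (LinearMap.mulLeft ℂ q2) ⊓ V := by
        ext z
        constructor
        · rintro ⟨y, hy, rfl⟩
          exact ⟨⟨y, hy.1, rfl⟩, hy.2⟩
        · rintro ⟨⟨y, hy, rfl⟩, hz⟩
          exact ⟨y, ⟨hy, hz⟩, rfl⟩
      have := inf_dim n (D.map (LinearMap.mulLeft ℂ q2)) V (by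
        rintro _ ⟨y, hy, rfl⟩
        exact hdeg q2 h2 d2 hkn y hy) hV
      rw [← e4, e2, e3] at this
      rw [e1]; omega
    · rintro _ ⟨y, hy, rfl⟩
      exact ⟨y, rfl, hy.2⟩

open Polynomial in
/-- Variational bound: a subspace where the form is nonpositive. -/
lemma eig_bound (u : ℝ → ℝ) (hu : Continuous u) (n : ℕ) (hA : (toeplitz u n).IsHermitian)
    (ε c : ℝ) (Z : Submodule ℂ ℂ[X]) (hZ : Z ≤ degreeLT ℂ n)
    (hQ : ∀ z ∈ Z, Qf (fun θ => ε * (u θ - c)) z ≤ 0) (S : Finset (Fin n))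
    (hS : n < Module.finrank ℂ Z + S.card) : ∃ i ∈ S, ε * (hA.eigenvalues i - c) ≤ 0 := by
  by_contra! hcon
  obtain ⟨W, hW, hWr, hWf⟩ := span_form (fun θ => ε * (u θ - c)) (by fun_prop) n
    (fun i => (hA.eigenvectorBasis i).ofLp) (fun i => ε * (hA.eigenvalues i - c)) (by
      intro i
      rw [toeplitz_affine u hu, Matrix.smul_mulVec, Matrix.sub_mulVec,
        hA.mulVec_eigenvectorBasis, Matrix.smul_mulVec, Matrix.one_mulVec]
      ext m
      simp [Complex.real_smul]
      ring) (by
      intro i j hij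
      have : inner ℂ (hA.eigenvectorBasis i) (hA.eigenvectorBasis j) = 0 :=
        hA.eigenvectorBasis.orthonormal.2 hij
      rw [EuclideanSpace.inner_eq_star_dotProduct, dotProduct_comm] at this
      exact this) (by
      intro i h
      have := hA.eigenvectorBasis.orthonormal.ne_zero i
      exact this (by ext m; exact congrFun h m)) S
  have hdim := inf_dim n Z W hZ hW
  rw [hWr] at hdim
  have hne : (Z ⊓ W : Submodule ℂ ℂ[X]) ≠ ⊥ := by
    intro h
    rw [h, finrank_bot] at hdim
    omega
  obtain ⟨p, hp, hp0⟩ := Submodule.exists_mem_ne_zero_of_ne_bot hne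
  obtain ⟨t, ht, ht', hf⟩ := hWf p hp.2
  obtain ⟨i, hi⟩ := ht' hp0
  have h1 := hQ p hp.1
  rw [hf] at h1
  have : 0 < ∑ i : S, ε * (hA.eigenvalues i - c) * t i := by
    refine Finset.sum_pos' (fun j _ => mul_nonneg (hcon j j.2).le (ht j))
      ⟨i, Finset.mem_univ _, mul_pos (hcon i i.2) hi⟩
  linarith

lemma Qf_nonpos (w : ℝ → ℝ) (hw : ∀ θ ∈ Set.Icc (0:ℝ) (2*π), w θ ≤ 0) (p : Polynomial ℂ) :
    Qf w p ≤ 0 := by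
  rw [Qf, ← neg_nonneg, ← intervalIntegral.integral_neg]
  refine intervalIntegral.integral_nonneg (by positivity) fun θ hθ => ?_
  have := hw θ hθ
  nlinarith [sq_nonneg ‖p.eval (Complex.exp (Complex.I * θ))‖]

lemma norm_one_add (θ ε : ℝ) (hε : ε = 1 ∨ ε = -1) :
    ‖1 + (ε:ℂ) * Complex.exp (Complex.I * θ)‖^2 = 2 * (1 + ε * Real.cos θ) := by
  rw [← Complex.normSq_eq_norm_sq, mul_comm Complex.I, Complex.exp_mul_I,
    ← Complex.ofReal_cos, ← Complex.ofReal_sin, Complex.normSq_apply]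
  simp only [Complex.add_re, Complex.add_im, Complex.mul_re, Complex.mul_im, Complex.ofReal_re,
    Complex.ofReal_im, Complex.one_re, Complex.one_im, Complex.I_re, Complex.I_im]
  rcases hε with rfl | rfl <;> nlinarith [Real.sin_sq_add_cos_sq θ]

open Polynomial in
/-- The key subspace construction. -/
lemma key_space (u : ℝ → ℝ) (hu : Continuous u) (n k : ℕ) (ε : ℝ) (hε : ε = 1 ∨ ε = -1)
    (s C : ℝ) (hC : 0 < C)
    (hpt : ∀ θ ∈ Set.Icc (0:ℝ) (2*π),
      ε * (u θ - u s) * (1 + ε * Real.cos θ)^k ≤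
        C * (ε * (Real.cos s - Real.cos θ)) * (1 - ε * Real.cos θ)^k)
    (S : Finset (Fin n))
    (hS : ∀ i ∈ S, ε * (Real.cos s - Real.cos (((i:ℕ)+1) * π * (1/(n+1:ℝ)))) ≤ 0) :
    ∃ Z : Submodule ℂ ℂ[X], Z ≤ degreeLT ℂ n ∧ S.card ≤ Module.finrank ℂ Z + k ∧
      ∀ z ∈ Z, Qf (fun θ => ε * (u θ - u s)) z ≤ 0 := by
  obtain ⟨V, hV, hVr, hVf⟩ := span_form (fun θ => (-ε) * (Real.cos θ - Real.cos s)) (by fun_prop) n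
    (sineVec n) (fun i => (-ε) * (Real.cos (((i:ℕ)+1) * π * (1/(n+1:ℝ))) - Real.cos s)) (by
      intro i
      rw [toeplitz_affine Real.cos Real.continuous_cos, Matrix.smul_mulVec, Matrix.sub_mulVec,
        toeplitz_cos_sine, Matrix.smul_mulVec, Matrix.one_mulVec, ← sub_smul, smul_smul]
      push_cast
      rfl) (sineVec_orth n) (sineVec_ne n) S
  have hεε : (ε:ℂ) ≠ 0 := by rcases hε with rfl | rfl <;> simp
  have hq : ∀ e : ℂ, e ≠ 0 → ((1 + Polynomial.C e * X)^k : ℂ[X]) ≠ 0 ∧ ((1 + Polynomial.C e * X)^k : ℂ[X]).natDegree ≤ k := by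
    intro e he
    constructor
    · refine pow_ne_zero _ fun h => ?_
      have := congrArg (eval 0) h
      simp at this
    · refine (natDegree_pow_le).trans ?_
      have : ((1 + Polynomial.C e * X) : ℂ[X]).natDegree ≤ 1 := by compute_degree
      nlinarith
  obtain ⟨Z, hZ, hZr, hZf⟩ := mul_space n k V hV ((1 + Polynomial.C (ε:ℂ) * X)^k) ((1 + Polynomial.C (-ε:ℂ) * X)^k)
    (hq _ hεε).1 (hq _ (neg_ne_zero.2 hεε)).1 (hq _ hεε).2 (hq _ (neg_ne_zero.2 hεε)).2
  refine ⟨Z, hZ, hVr ▸ hZr, fun z hz => ?_⟩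
  obtain ⟨y, rfl, hy⟩ := hZf z hz
  obtain ⟨t, ht, -, hf⟩ := hVf _ hy
  have hneg : Qf (fun θ => (-ε) * (Real.cos θ - Real.cos s)) ((1 + Polynomial.C (-ε:ℂ) * X)^k * y) ≤ 0 := by
    rw [hf]
    refine Finset.sum_nonpos fun i _ => mul_nonpos_of_nonpos_of_nonneg ?_ (ht i)
    have := hS i i.2
    linarith
  refine le_trans ?_ (mul_nonpos_of_nonneg_of_nonpos hC.le hneg)
  rw [Qf, Qf, ← intervalIntegral.integral_const_mul]
  refine intervalIntegral.integral_mono_on (by positivity)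
    (Continuous.intervalIntegrable (by fun_prop) _ _)
    (Continuous.intervalIntegrable (by fun_prop) _ _) fun θ hθ => ?_
  have e1 := norm_one_add θ ε hε
  have e2 := norm_one_add θ (-ε) (by rcases hε with rfl | rfl <;> simp)
  simp only [eval_mul, eval_pow, eval_add, eval_one, eval_C, eval_X, norm_mul, norm_pow]
  push_cast at e2
  rw [mul_pow, mul_pow, pow_right_comm, e1, pow_right_comm, e2, mul_pow, mul_pow]
  have h := mul_le_mul_of_nonneg_right (hpt θ hθ)
    (show 0 ≤ 2^k * ‖eval (Complex.exp (Complex.I * θ)) y‖^2 by positivity)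
  have e3 : 1 + -ε * Real.cos θ = 1 - ε * Real.cos θ := by ring
  rw [e3]
  calc _ = _ := by ring
    _ ≤ _ := h
    _ = _ := by ring

lemma sorted_le (n : ℕ) (A : Matrix (Fin n) (Fin n) ℂ) (hA : A.IsHermitian) (j : Fin n) (c : ℝ)
    (h : ∀ S : Finset (Fin n), S.card = n - j → ∃ i ∈ S, hA.eigenvalues i ≤ c) :
    sortedEigs hA j ≤ c := by
  have hmono : Monotone (sortedEigs hA) := Tuple.monotone_sort _
  obtain ⟨i, hi, hc⟩ := h ((Finset.Ici j).map (Tuple.sort hA.eigenvalues).toEmbedding)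
    (by rw [Finset.card_map, Fin.card_Ici])
  rw [Finset.mem_map] at hi
  obtain ⟨m, hm, rfl⟩ := hi
  exact (hmono (Finset.mem_Ici.1 hm)).trans hc

lemma le_sorted (n : ℕ) (A : Matrix (Fin n) (Fin n) ℂ) (hA : A.IsHermitian) (j : Fin n) (c : ℝ)
    (h : ∀ S : Finset (Fin n), S.card = j + 1 → ∃ i ∈ S, c ≤ hA.eigenvalues i) :
    c ≤ sortedEigs hA j := by
  have hmono : Monotone (sortedEigs hA) := Tuple.monotone_sort _
  obtain ⟨i, hi, hc⟩ := h ((Finset.Iic j).map (Tuple.sort hA.eigenvalues).toEmbedding)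
    (by rw [Finset.card_map, Fin.card_Iic])
  rw [Finset.mem_map] at hi
  obtain ⟨m, hm, rfl⟩ := hi
  exact hc.trans (hmono (Finset.mem_Iic.1 hm))

lemma cos_node_anti (n : ℕ) (i j : Fin n) (hij : i ≤ j) :
    Real.cos (((j:ℕ)+1) * π * (1/(n+1:ℝ))) ≤ Real.cos (((i:ℕ)+1) * π * (1/(n+1:ℝ))) := by
  refine Real.cos_le_cos_of_nonneg_of_le_pi (sine_node n i).1.le (sine_node n j).2.le ?_
  have : ((i:ℕ):ℝ) ≤ (j:ℕ) := by exact_mod_cast hij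
  have := Real.pi_pos
  gcongr

/-- Main estimate for a single symbol. -/
lemma main_single (α : ℝ) (u : ℝ → ℝ) (hu : IsSimpleLoop α u)
    (hH : ∀ n : ℕ, (toeplitz u n).IsHermitian) :
    ∃ κ > (0:ℝ), ∀ (n : ℕ) (j : Fin n),
      |sortedEigs (hH n) j - u (((j:ℕ)+1) * π * (1/(n+1:ℝ)))| ≤ κ * (1/(n+1:ℝ)) := by
  have hpi := Real.pi_pos
  have hd : Differentiable ℝ u := hu.smooth.differentiable (by norm_num)
  have hd1 : ContDiff ℝ 1 (deriv u) := by
    have h2 : ContDiff ℝ (1 + 1) u := by simpa [one_add_one_eq_two] using hu.smooth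
    exact (contDiff_succ_iff_deriv.1 h2).2.2
  have hd2 : Differentiable ℝ (deriv u) := hd1.differentiable (by norm_num)
  have hc1 : Continuous (deriv u) := hd1.continuous
  have hc2 : Continuous (deriv (deriv u)) := hd1.continuous_deriv le_rfl
  have hcu : Continuous u := hd.continuous
  have hder : ∀ θ, HasDerivAt u (deriv u θ) θ := fun θ => (hd θ).hasDerivAt
  have hder2 : ∀ θ, HasDerivAt (deriv u) (deriv (deriv u) θ) θ := fun θ => (hd2 θ).hasDerivAt
  obtain ⟨δ, hδ, hδ'⟩ := aux_deriv_lower (deriv u) hc1 _ _ (hder2 0) hu.deriv2_zero (hder2 π)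
    hu.deriv2_pi hu.deriv_zero hu.deriv_pi hu.deriv_pos
  obtain ⟨M, hM⟩ := (isCompact_Icc (a := (0:ℝ)) (b := π)).exists_bound_of_continuousOn
    hc2.continuousOn
  obtain ⟨L, hL⟩ := (isCompact_Icc (a := (0:ℝ)) (b := π)).exists_bound_of_continuousOn
    hc1.continuousOn
  have hM0 : 0 ≤ M := (norm_nonneg _).trans (hM 0 ⟨le_rfl, hpi.le⟩)
  have hL0 : 0 ≤ L := (norm_nonneg _).trans (hL 0 ⟨le_rfl, hpi.le⟩)
  obtain ⟨k, hk⟩ := exists_nat_ge (M / δ + 1)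
  have hkey : ∀ θ ∈ Set.Ioo (0:ℝ) π,
      |Real.sin θ * deriv (deriv u) θ - Real.cos θ * deriv u θ| ≤ 2 * k * deriv u θ := by
    intro θ hθ
    have hI := Set.Ioo_subset_Icc_self hθ
    have hs := Real.sin_pos_of_mem_Ioo hθ
    have hp := hu.deriv_pos θ hθ
    have h1 := hδ' θ hI
    have h2 : |deriv (deriv u) θ| ≤ M := hM θ hI
    have h3 : |Real.sin θ * deriv (deriv u) θ| ≤ M / δ * deriv u θ := by
      rw [abs_mul, abs_of_pos hs]
      calc Real.sin θ * |deriv (deriv u) θ| ≤ Real.sin θ * M := by gcongr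
        _ = M / δ * (δ * Real.sin θ) := by field_simp
        _ ≤ M / δ * deriv u θ := by gcongr
    have h4 : |Real.cos θ * deriv u θ| ≤ 1 * deriv u θ := by
      rw [abs_mul, abs_of_pos hp]
      gcongr
      exact Real.abs_cos_le_one θ
    refine (abs_sub _ _).trans ?_
    have h5 : (M / δ + 1) * deriv u θ ≤ k * deriv u θ := by gcongr
    have h6 : 0 ≤ k * deriv u θ := by positivity
    linarith
  have hpt := fun ε hε s hs => aux_pointwise' u (deriv u) (deriv (deriv u)) k hder hu.symm
    (fun θ _ => hder2 θ) hu.deriv_pos hkey ε hε s hs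
  have hmono : MonotoneOn u (Set.Icc 0 π) := by
    refine monotoneOn_of_deriv_nonneg (convex_Icc _ _) hcu.continuousOn hd.differentiableOn ?_
    rw [interior_Icc]
    exact fun θ hθ => (hu.deriv_pos θ hθ).le
  have hrange : ∀ θ ∈ Set.Icc (0:ℝ) (2*π), u 0 ≤ u θ ∧ u θ ≤ u π := by
    have h0 : ∀ θ ∈ Set.Icc (0:ℝ) π, u 0 ≤ u θ ∧ u θ ≤ u π := fun θ hθ =>
      ⟨hmono ⟨le_rfl, hpi.le⟩ hθ hθ.1, hmono hθ ⟨hpi.le, le_rfl⟩ hθ.2⟩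
    intro θ hθ
    rcases le_total θ π with h | h
    · exact h0 θ ⟨hθ.1, h⟩
    · rw [← hu.symm θ]
      exact h0 _ ⟨by linarith [hθ.2], by linarith⟩
  have hlip : ∀ a ∈ Set.Icc (0:ℝ) π, ∀ b ∈ Set.Icc (0:ℝ) π, a ≤ b → u b - u a ≤ L * (b - a) := by
    intro a ha b hb hab
    have := (convex_Icc (0:ℝ) π).norm_image_sub_le_of_norm_deriv_le (fun x _ => hd x) hL ha hb
    rw [Real.norm_eq_abs, Real.norm_eq_abs, abs_of_nonneg (sub_nonneg.2 hab)] at this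
    exact (le_abs_self _).trans this
  refine ⟨L * (π * (k + 1)) + 1, by positivity, fun n j => ?_⟩
  have hn : (0:ℝ) < n + 1 := by positivity
  have hj := j.2
  have hnodeI := Set.Ioo_subset_Icc_self (sine_node n j)
  have hone : 0 ≤ 1 / (n+1:ℝ) := by positivity
  -- upper bound
  have hup : ∃ b ∈ Set.Icc (0:ℝ) π, ((j:ℕ)+1) * π * (1/(n+1:ℝ)) ≤ b ∧
      b ≤ ((j:ℕ)+1) * π * (1/(n+1:ℝ)) + π * (k+1) * (1/(n+1:ℝ)) ∧ sortedEigs (hH n) j ≤ u b := by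
    rcases lt_or_ge ((j:ℕ) + k) n with hjk | hjk
    · let m : Fin n := ⟨j + k, hjk⟩
      have hm := sine_node n m
      refine ⟨((m:ℕ)+1) * π * (1/(n+1:ℝ)), Set.Ioo_subset_Icc_self hm, ?_, ?_, ?_⟩
      · have : ((j:ℕ):ℝ) ≤ (m:ℕ) := by simp [m]
        gcongr
      · simp only [m]
        push_cast
        rw [← add_mul]
        refine mul_le_mul_of_nonneg_right ?_ hone
        nlinarith
      · obtain ⟨C, hC, hCp⟩ := hpt 1 (Or.inl rfl) _ hm
        obtain ⟨Z, hZ, hZr, hZf⟩ := key_space u hcu n k 1 (Or.inl rfl) _ C hC hCp (Finset.Iic m)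
          (fun i hi => by have := cos_node_anti n i m (Finset.mem_Iic.1 hi); linarith)
        rw [Fin.card_Iic] at hZr
        refine sorted_le n _ (hH n) j _ fun S hS => ?_
        obtain ⟨i, hi, hi'⟩ := eig_bound u hcu n (hH n) 1 _ Z hZ hZf S
          (by rw [hS]; simp only [m] at hZr; omega)
        exact ⟨i, hi, by linarith⟩
    · refine ⟨π, ⟨hpi.le, le_rfl⟩, hnodeI.2, ?_, ?_⟩
      · rw [← add_mul, mul_one_div, le_div_iff₀ hn]
        have : (n:ℝ) ≤ (j:ℕ) + k := by exact_mod_cast hjk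
        nlinarith
      · refine sorted_le n _ (hH n) j _ fun S hS => ?_
        obtain ⟨i, hi, hi'⟩ := eig_bound u hcu n (hH n) 1 (u π) _ le_rfl
          (fun z _ => Qf_nonpos _ (fun θ hθ => by linarith [(hrange θ hθ).2]) z) S
          (by rw [hS, finrank_degreeLT']; omega)
        exact ⟨i, hi, by linarith⟩
  have hlo : ∃ b ∈ Set.Icc (0:ℝ) π, b ≤ ((j:ℕ)+1) * π * (1/(n+1:ℝ)) ∧
      ((j:ℕ)+1) * π * (1/(n+1:ℝ)) ≤ b + π * (k+1) * (1/(n+1:ℝ)) ∧ u b ≤ sortedEigs (hH n) j := by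
    rcases le_or_gt k (j:ℕ) with hjk | hjk
    · let m : Fin n := ⟨j - k, by omega⟩
      have hmj : ((m:ℕ):ℝ) = (j:ℕ) - k := by simp only [m]; push_cast [hjk]; ring
      have hm := sine_node n m
      refine ⟨((m:ℕ)+1) * π * (1/(n+1:ℝ)), Set.Ioo_subset_Icc_self hm, ?_, ?_, ?_⟩
      · have : ((m:ℕ):ℝ) ≤ (j:ℕ) := by rw [hmj]; simp
        gcongr
      · rw [hmj, ← add_mul]
        refine mul_le_mul_of_nonneg_right ?_ hone
        nlinarith
      · obtain ⟨C, hC, hCp⟩ := hpt (-1) (Or.inr rfl) _ hm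
        obtain ⟨Z, hZ, hZr, hZf⟩ := key_space u hcu n k (-1) (Or.inr rfl) _ C hC hCp (Finset.Ici m)
          (fun i hi => by have := cos_node_anti n m i (Finset.mem_Ici.1 hi); linarith)
        rw [Fin.card_Ici] at hZr
        refine le_sorted n _ (hH n) j _ fun S hS => ?_
        obtain ⟨i, hi, hi'⟩ := eig_bound u hcu n (hH n) (-1) _ Z hZ hZf S
          (by rw [hS]; simp only [m] at hZr; omega)
        exact ⟨i, hi, by linarith⟩
    · refine ⟨0, ⟨le_rfl, hpi.le⟩, hnodeI.1, ?_, ?_⟩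
      · rw [zero_add]
        refine mul_le_mul_of_nonneg_right ?_ hone
        have : ((j:ℕ):ℝ) ≤ k := by exact_mod_cast hjk.le
        nlinarith
      · refine le_sorted n _ (hH n) j _ fun S hS => ?_
        obtain ⟨i, hi, hi'⟩ := eig_bound u hcu n (hH n) (-1) (u 0) _ le_rfl
          (fun z _ => Qf_nonpos _ (fun θ hθ => by linarith [(hrange θ hθ).1]) z) S
          (by rw [hS, finrank_degreeLT']; omega)
        exact ⟨i, hi, by linarith⟩
  obtain ⟨b, hb, hb1, hb2, hb3⟩ := hup
  obtain ⟨a, ha, ha1, ha2, ha3⟩ := hlo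
  have l1 := hlip _ hnodeI b hb hb1
  have l2 := hlip a ha _ hnodeI ha1
  have m1 : L * (b - ((j:ℕ)+1) * π * (1/(n+1:ℝ))) ≤ L * (π * (k+1) * (1/(n+1:ℝ))) :=
    mul_le_mul_of_nonneg_left (by linarith) hL0
  have m2 : L * (((j:ℕ)+1) * π * (1/(n+1:ℝ)) - a) ≤ L * (π * (k+1) * (1/(n+1:ℝ))) :=
    mul_le_mul_of_nonneg_left (by linarith) hL0
  have e : (L * (π * (k + 1)) + 1) * (1/(n+1:ℝ)) =
    L * (π * (k+1) * (1/(n+1:ℝ))) + 1/(n+1:ℝ) := by ring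
  rw [e, abs_le]
  constructor <;> linarith

open Real in
/-- First-order localization of the eigenvalues of `T_n(f + β·g)` for a constant `β > 0`:
`λ_j(T_n(f + β g)) = f(d_{j,n}) + β g(d_{j,n}) + O(h)`. -/
theorem eigenvalue_first_order (α : ℝ) (hα : 2 ≤ α) (f g : ℝ → ℝ) (β : ℝ) (hβ : 0 < β)
    (hf : IsSimpleLoop α f) (hg : IsSimpleLoop α g)
    (hSL : IsSimpleLoop α (fun θ => f θ + β * g θ))
    (hH : ∀ n : ℕ, (toeplitz (fun θ => f θ + β * g θ) n).IsHermitian) :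
    ∃ κ > (0:ℝ), ∀ (n : ℕ) (j : Fin n),
      |sortedEigs (hH n) j - f (((j:ℕ)+1) * π * (1/(n+1:ℝ)))
          - β * g (((j:ℕ)+1) * π * (1/(n+1:ℝ)))|
        ≤ κ * (1/(n+1:ℝ)) := by
  obtain ⟨κ, hκ, h⟩ := main_single α _ hSL hH
  refine ⟨κ, hκ, fun n j => ?_⟩
  have := h n j
  rwa [sub_sub]
end

section
/- For every constant 0 < ρ < 1, the Fourier coefficients of the function f_ρ(σ) = ((1+ρ)²/2) · (1 − cos σ)/(1 − 2ρ cos σ + ρ²) are given by: (f_ρ)̂_0 = (1+ρ)/2, and (f_ρ)̂_k = (ρ² − 1)·ρ^{|k|−1}/4 for every integer k ≠ 0. -/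
open MeasureTheory Filter Real Topology

/-- The Kac–Murdock–Szegő symbol. -/
noncomputable def kms (ρ : ℝ) : ℝ → ℝ :=
  fun σ => ((1+ρ)^2/2) * ((1 - Real.cos σ)/(1 - 2*ρ*Real.cos σ + ρ^2))

lemma kms_aux_congr {ι : Type} {f g : ι → ℂ} {a : ℂ} (h : HasSum g a) (hfg : ∀ n, f n = g n) :
    HasSum f a := by
  rwa [funext hfg]

lemma kms_aux_int (m : ℤ) :
    ∫ θ in (0:ℝ)..(2*π), Complex.exp ((Complex.I * (m : ℂ)) * (θ : ℂ)) =
      if m = 0 then 2 * (π : ℂ) else 0 := by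
  split_ifs with h
  · subst h; simp
  · have hc : Complex.I * (m : ℂ) ≠ 0 := mul_ne_zero Complex.I_ne_zero (by exact_mod_cast h)
    rw [integral_exp_mul_complex hc]
    have : Complex.exp (Complex.I * (m : ℂ) * ((2 * π : ℝ) : ℂ)) = 1 := by
      rw [Complex.exp_eq_one_iff]
      exact ⟨m, by push_cast; ring⟩
    rw [this]; simp

lemma kms_aux_den (ρ : ℝ) (hρ : ρ ∈ Set.Ioo (0:ℝ) 1) (θ : ℝ) :
    0 < 1 - 2*ρ*Real.cos θ + ρ^2 := by
  obtain ⟨h0, h1⟩ := hρ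
  nlinarith [Real.cos_le_one θ, mul_nonneg h0.le (sub_nonneg.2 (Real.cos_le_one θ)),
    mul_pos (sub_pos.2 h1) (sub_pos.2 h1)]

lemma kms_aux_hasSum (ρ : ℝ) (hρ : ρ ∈ Set.Ioo (0:ℝ) 1) (θ : ℝ) :
    HasSum (fun n : ℤ => ((ρ ^ n.natAbs : ℝ) : ℂ) * Complex.exp (Complex.I * (n : ℂ) * (θ : ℂ)))
      (((1 - ρ^2) / (1 - 2*ρ*Real.cos θ + ρ^2) : ℝ) : ℂ) := by
  have hD := kms_aux_den ρ hρ θ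
  obtain ⟨h0, h1⟩ := hρ
  set z := Complex.exp (Complex.I * θ) with hz
  set w := Complex.exp (-(Complex.I * θ)) with hw
  have hzw : z * w = 1 := by rw [hz, hw, ← Complex.exp_add]; simp
  have nz : ‖z‖ = 1 := by rw [hz, mul_comm]; exact Complex.norm_exp_ofReal_mul_I θ
  have nw : ‖w‖ = 1 := by
    have := congrArg norm hzw
    rwa [norm_mul, nz, one_mul, norm_one] at this
  have nρ : ‖(ρ : ℂ)‖ = ρ := by simp [abs_of_pos h0]
  have n1 : ‖(ρ : ℂ) * z‖ < 1 := by rw [norm_mul, nz, nρ]; linarith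
  have n2 : ‖(ρ : ℂ) * w‖ < 1 := by rw [norm_mul, nw, nρ]; linarith
  have s1 := hasSum_geometric_of_norm_lt_one n1
  have s2 := (hasSum_geometric_of_norm_lt_one n2).mul_left ((ρ : ℂ) * w)
  have hcos : ((Real.cos θ : ℝ) : ℂ) = (z + w) / 2 := by
    rw [Complex.ofReal_cos, Complex.cos, hz, hw]
    congr 3 <;> ring_nf
  have d1 : 1 - (ρ : ℂ) * z ≠ 0 := by
    intro h
    rw [← sub_eq_zero.1 h] at n1; simp at n1
  have d2 : 1 - (ρ : ℂ) * w ≠ 0 := by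
    intro h
    rw [← sub_eq_zero.1 h] at n2; simp at n2
  have hDc : (1 - 2*ρ*((Real.cos θ : ℝ) : ℂ) + ρ^2 : ℂ) = (1 - ρ * z) * (1 - ρ * w) := by
    rw [hcos]; linear_combination -(ρ:ℂ)^2 * hzw
  have key : (((1 - ρ^2) / (1 - 2*ρ*Real.cos θ + ρ^2) : ℝ) : ℂ)
      = (1 - (ρ : ℂ) * z)⁻¹ + (ρ : ℂ) * w * (1 - (ρ : ℂ) * w)⁻¹ := by
    simp only [Complex.ofReal_div, Complex.ofReal_sub, Complex.ofReal_add, Complex.ofReal_mul,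
      Complex.ofReal_pow, Complex.ofReal_one, Complex.ofReal_ofNat]
    rw [hDc]
    field_simp
    linear_combination (ρ:ℂ)^2 * hzw
  rw [key]
  refine HasSum.of_nat_of_neg_add_one ?_ ?_
  · refine kms_aux_congr s1 fun n => ?_
    rw [mul_pow, hz, ← Complex.exp_nat_mul]
    push_cast
    congr 2
    ring
  · refine kms_aux_congr s2 fun n => ?_
    have : (-((n : ℤ) + 1)).natAbs = n + 1 := by omega
    rw [this, ← pow_succ', mul_pow, hw, ← Complex.exp_nat_mul]
    push_cast
    congr 2
    ring

lemma kms_aux_summable (ρ : ℝ) (hρ : ρ ∈ Set.Ioo (0:ℝ) 1) :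
    Summable (fun n : ℤ => ρ ^ n.natAbs) := by
  have := (kms_aux_hasSum ρ hρ 0).summable
  simp only [Complex.ofReal_zero, mul_zero, Complex.exp_zero, mul_one] at this
  exact_mod_cast this

lemma kms_aux_poisson (ρ : ℝ) (hρ : ρ ∈ Set.Ioo (0:ℝ) 1) (k : ℤ) :
    ∫ θ in (0:ℝ)..(2*π), (((1 - ρ^2) / (1 - 2*ρ*Real.cos θ + ρ^2) : ℝ) : ℂ) *
      Complex.exp (-Complex.I * (k : ℂ) * (θ : ℂ)) = 2 * π * ((ρ ^ k.natAbs : ℝ) : ℂ) := by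
  have h := intervalIntegral.hasSum_integral_of_dominated_convergence (μ := volume)
    (a := 0) (b := 2 * π)
    (F := fun (n : ℤ) (θ : ℝ) => ((ρ ^ n.natAbs : ℝ) : ℂ) *
      Complex.exp (Complex.I * (n : ℂ) * (θ : ℂ)) * Complex.exp (-Complex.I * (k : ℂ) * (θ : ℂ)))
    (f := fun θ : ℝ => (((1 - ρ^2) / (1 - 2*ρ*Real.cos θ + ρ^2) : ℝ) : ℂ) *
      Complex.exp (-Complex.I * (k : ℂ) * (θ : ℂ)))
    (fun (n : ℤ) _ => ρ ^ n.natAbs)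
    (fun n => Continuous.aestronglyMeasurable (by fun_prop))
    (fun n => Eventually.of_forall fun θ _ => by
      rw [norm_mul, norm_mul, Complex.norm_exp, Complex.norm_exp]
      simp [abs_of_pos hρ.1])
    (Eventually.of_forall fun θ _ => kms_aux_summable ρ hρ)
    (by simp)
    (Eventually.of_forall fun θ _ => (kms_aux_hasSum ρ hρ θ).mul_right _)
  refine h.unique ?_
  have h2 := hasSum_ite_eq k (2 * (π : ℂ) * ((ρ ^ k.natAbs : ℝ) : ℂ))
  refine kms_aux_congr h2 fun n => ?_
  have : ∀ θ : ℝ, ((ρ ^ n.natAbs : ℝ) : ℂ) *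
      Complex.exp (Complex.I * (n : ℂ) * (θ : ℂ)) * Complex.exp (-Complex.I * (k : ℂ) * (θ : ℂ))
      = ((ρ ^ n.natAbs : ℝ) : ℂ) * Complex.exp ((Complex.I * ((n - k : ℤ) : ℂ)) * (θ : ℂ)) := by
    intro θ
    rw [mul_assoc, ← Complex.exp_add]
    push_cast
    congr 2
    ring
  simp only [this]
  rw [intervalIntegral.integral_const_mul, kms_aux_int]
  by_cases hnk : n = k
  · subst hnk; simp; ring
  · simp [hnk, sub_eq_zero]

lemma kms_aux_main (ρ : ℝ) (hρ : ρ ∈ Set.Ioo (0:ℝ) 1) (k : ℤ) :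
    fCoeff (kms ρ) k = 1 / (4 * (ρ : ℂ)) * ((1 + ρ)^2 * (if k = 0 then 1 else 0)
      - (1 - ρ^2) * ((ρ ^ k.natAbs : ℝ) : ℂ)) := by
  have hρ0 : (ρ : ℂ) ≠ 0 := by exact_mod_cast hρ.1.ne'
  have hpi : (π : ℂ) ≠ 0 := by exact_mod_cast Real.pi_ne_zero
  have hpt : ∀ θ : ℝ, (kms ρ θ : ℂ) * Complex.exp (-Complex.I * (k : ℂ) * (θ : ℂ)) =
      ((1 + ρ)^2 / (4 * ρ) : ℂ) * Complex.exp ((Complex.I * ((-k : ℤ) : ℂ)) * (θ : ℂ))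
      - ((1 - ρ^2) / (4 * ρ) : ℂ) * ((((1 - ρ^2) / (1 - 2*ρ*Real.cos θ + ρ^2) : ℝ) : ℂ) *
      Complex.exp (-Complex.I * (k : ℂ) * (θ : ℂ))) := by
    intro θ
    have hD := (kms_aux_den ρ hρ θ).ne'
    have hr : ρ ≠ 0 := hρ.1.ne'
    have e : kms ρ θ = (1 + ρ)^2 / (4 * ρ) - (1 - ρ^2) / (4 * ρ) *
        ((1 - ρ^2) / (1 - 2*ρ*Real.cos θ + ρ^2)) := by
      unfold kms
      generalize Real.cos θ = c at *
      rw [eq_sub_iff_add_eq]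
      rw [div_mul_div_comm, ← mul_div_assoc, div_mul_eq_mul_div, div_div, div_add_div _ _ (by positivity) (by positivity), div_eq_div_iff (by positivity) (by positivity)]
      ring
    have e2 : Complex.exp ((Complex.I * ((-k : ℤ) : ℂ)) * (θ : ℂ)) =
        Complex.exp (-Complex.I * (k : ℂ) * (θ : ℂ)) := by
      congr 1; push_cast; ring
    rw [e, e2, Complex.ofReal_sub, Complex.ofReal_mul]
    push_cast
    ring
  unfold fCoeff
  simp only [hpt]
  have hcont : Continuous fun θ : ℝ => (((1 - ρ^2) / (1 - 2*ρ*Real.cos θ + ρ^2) : ℝ) : ℂ) := by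
    refine Complex.continuous_ofReal.comp ?_
    exact Continuous.div (by fun_prop) (by fun_prop) fun θ => (kms_aux_den ρ hρ θ).ne'
  rw [intervalIntegral.integral_sub, intervalIntegral.integral_const_mul,
    intervalIntegral.integral_const_mul, kms_aux_int, kms_aux_poisson ρ hρ]
  · simp only [neg_eq_zero]
    split_ifs <;> field_simp <;> ring
  · exact Continuous.intervalIntegrable (by fun_prop) _ _
  · exact Continuous.intervalIntegrable (by fun_prop) _ _

/-- Fourier coefficients of the Kac–Murdock–Szegő symbol. -/
theorem kms_fourierCoeff (ρ : ℝ) (hρ : ρ ∈ Set.Ioo (0:ℝ) 1) :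
    fCoeff (kms ρ) 0 = (((1+ρ)/2 : ℝ) : ℂ) ∧
    ∀ k : ℤ, k ≠ 0 →
      fCoeff (kms ρ) k = (((ρ^2 - 1) * ρ^(k.natAbs - 1) / 4 : ℝ) : ℂ) := by
  have hρ0 : (ρ : ℂ) ≠ 0 := by exact_mod_cast hρ.1.ne'
  refine ⟨?_, fun k hk => ?_⟩
  · rw [kms_aux_main ρ hρ]
    simp only [if_true, Int.natAbs_zero, pow_zero]
    push_cast
    field_simp
    ring
  · rw [kms_aux_main ρ hρ]
    obtain ⟨m, hm⟩ : ∃ m, k.natAbs = m + 1 := ⟨k.natAbs - 1, by omega⟩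
    rw [hm, if_neg hk]
    simp only [Nat.add_sub_cancel]
    push_cast
    field_simp
    ring
end

section
/- For every constant 0 < ρ < 1 and all real σ, s with cos σ ≠ cos s: (f_ρ(σ) − f_ρ(s)) / (2(cos s − cos σ)) = (1−ρ²)² / (4·(1 − 2ρ cos σ + ρ²)·(1 − 2ρ cos s + ρ²)). In particular b_{f_ρ}(σ,s) is positive and bounded away from zero, uniformly in σ and s. -/
open MeasureTheory Filter Real Topology

lemma kms_den_pos (ρ : ℝ) (hρ : ρ ∈ Set.Ioo (0:ℝ) 1) (σ : ℝ) :
    0 < 1 - 2*ρ*Real.cos σ + ρ^2 := by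
  obtain ⟨h0, h1⟩ := hρ
  nlinarith [mul_le_mul_of_nonneg_left (Real.cos_le_one σ) h0.le, sq_nonneg (1 - ρ),
    mul_pos (sub_pos.2 h1) (sub_pos.2 h1)]

lemma kms_den_le (ρ : ℝ) (hρ : ρ ∈ Set.Ioo (0:ℝ) 1) (σ : ℝ) :
    1 - 2*ρ*Real.cos σ + ρ^2 ≤ (1+ρ)^2 := by
  obtain ⟨h0, h1⟩ := hρ
  nlinarith [mul_le_mul_of_nonneg_left (Real.neg_one_le_cos σ) h0.le]

lemma kms_formula (ρ : ℝ) (hρ : ρ ∈ Set.Ioo (0:ℝ) 1) (σ s : ℝ) (h : Real.cos σ ≠ Real.cos s) :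
    (kms ρ σ - kms ρ s) / (2*(Real.cos s - Real.cos σ))
        = (1-ρ^2)^2 /
            (4*(1 - 2*ρ*Real.cos σ + ρ^2)*(1 - 2*ρ*Real.cos s + ρ^2)) := by
  have h1 := (kms_den_pos ρ hρ σ).ne'
  have h2 := (kms_den_pos ρ hρ s).ne'
  have h3 : Real.cos s - Real.cos σ ≠ 0 := sub_ne_zero.2 h.symm
  unfold kms
  generalize Real.cos σ = x at *
  generalize Real.cos s = y at *
  rw [← mul_sub, div_sub_div _ _ h1 h2, ← mul_div_assoc, div_div,
    div_eq_div_iff (by positivity) (by positivity)]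
  ring

lemma cos_eventually_ne (σ : ℝ) : ∀ᶠ τ in 𝓝[≠] σ, Real.cos τ ≠ Real.cos σ := by
  rcases (Real.analyticAt_cos (x := σ)).eventually_eq_or_eventually_ne
    (analyticAt_const (v := Real.cos σ)) with h | h
  · exfalso
    have h2 := AnalyticOnNhd.eq_of_eventuallyEq (f := Real.cos) (g := fun _ => Real.cos σ)
      (fun x _ => Real.analyticAt_cos) (fun x _ => analyticAt_const) h
    have a := congrFun h2 0
    have b := congrFun h2 π
    simp only [Real.cos_zero, Real.cos_pi] at a b
    linarith
  · exact h

lemma kms_bSymb (ρ : ℝ) (hρ : ρ ∈ Set.Ioo (0:ℝ) 1) (σ s : ℝ) :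
    bSymb (kms ρ) σ s = (1-ρ^2)^2 /
            (4*(1 - 2*ρ*Real.cos σ + ρ^2)*(1 - 2*ρ*Real.cos s + ρ^2)) := by
  unfold bSymb
  split_ifs with h
  · apply Tendsto.limUnder_eq
    have hc : ContinuousAt (fun τ => (1-ρ^2)^2 /
            (4*(1 - 2*ρ*Real.cos τ + ρ^2)*(1 - 2*ρ*Real.cos s + ρ^2))) σ := by
      have h1 := kms_den_pos ρ hρ σ
      have h2 := kms_den_pos ρ hρ s
      apply ContinuousAt.div (by fun_prop) (by fun_prop)
      positivity
    refine (hc.tendsto.mono_left nhdsWithin_le_nhds).congr' ?_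
    filter_upwards [cos_eventually_ne σ] with τ hτ
    exact (kms_formula ρ hρ τ s (h ▸ hτ)).symm
  · exact kms_formula ρ hρ σ s h

/-- Explicit formula for `b_{f_ρ}`; in particular `b_{f_ρ}` is positive and bounded away
from zero, uniformly in `σ` and `s`. -/
theorem kms_b_formula (ρ : ℝ) (hρ : ρ ∈ Set.Ioo (0:ℝ) 1) :
    (∀ σ s : ℝ, Real.cos σ ≠ Real.cos s →
      (kms ρ σ - kms ρ s) / (2*(Real.cos s - Real.cos σ))
        = (1-ρ^2)^2 /
            (4*(1 - 2*ρ*Real.cos σ + ρ^2)*(1 - 2*ρ*Real.cos s + ρ^2))) ∧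
    ∃ c > (0:ℝ), ∀ σ s : ℝ, c ≤ bSymb (kms ρ) σ s := by
  refine ⟨kms_formula ρ hρ, (1-ρ^2)^2 / (4*(1+ρ)^2*(1+ρ)^2), ?_, fun σ s => ?_⟩
  · obtain ⟨h0, h1⟩ := hρ
    have : 0 < 1 - ρ^2 := by nlinarith
    positivity
  · rw [kms_bSymb ρ hρ]
    have h1 := kms_den_pos ρ hρ σ
    have h2 := kms_den_pos ρ hρ s
    have h3 := kms_den_le ρ hρ σ
    have h4 := kms_den_le ρ hρ s
    gcongr
end
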